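/- arXiv:math/0402330 — 3 statements merged into one kernel-verified Lean document; each statement's English description precedes it below -/
import Mathlib

section
/- Let k be an algebraically closed field of characteristic zero and W the first Weyl algebra. Every ∂_q-invariant automorphism θ of M_N(W) has the form θ(a(p,q)) = Q^{-1}(p)·a(p+α, q-h(p))·Q(p) for some α ∈ k, polynomial h(p) ∈ k[p], and matrix Q ∈ M_N(k[p]) invertible in M_N(k[p]). Moreover, θ is continuous in the q-topology if and only if h = 0. -/
open Polynomial

set_option synthInstance.maxHeartbeats 1000000
set_option maxHeartbeats 1000000

noncomputable section

variable (k : Type*) [Field k] [CharZero k]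

/-- The operator `p`: multiplication by `X` on `k[X]`. -/
def pOp : Module.End k (Polynomial k) := LinearMap.mulLeft k (X : Polynomial k)

/-- The operator `q = d/dX` on `k[X]`. -/
def qOp : Module.End k (Polynomial k) := derivative

/-- The (first) Weyl algebra, realized concretely as the subalgebra of
`End_k(k[X])` generated by multiplication by `X` and `d/dX`.  (In characteristic
zero this is a faithful model of `k⟨p,q | qp - pq = 1⟩`.) -/
def WeylA : Subalgebra k (Module.End k (Polynomial k)) :=
  Algebra.adjoin k {pOp k, qOp k}

/-- The element `p` of the Weyl algebra. -/
def pW : WeylA k := ⟨pOp k, Algebra.subset_adjoin (Set.mem_insert _ _)⟩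

/-- The element `q` of the Weyl algebra. -/
def qW : WeylA k := ⟨qOp k, Algebra.subset_adjoin (Set.mem_insert_of_mem _ rfl)⟩

variable (N : ℕ)

/-- `M_N(W)`, the `N×N` matrices over the Weyl algebra. -/
abbrev MW := Matrix (Fin N) (Fin N) (WeylA k)

/-- The scalar matrix `p·Id_N`. -/
def pM : MW k N := Matrix.diagonal fun _ => pW k

/-- The scalar matrix `q·Id_N`. -/
def qM : MW k N := Matrix.diagonal fun _ => qW k

/-- The derivation `∂_q(a) = [a,p]` on `M_N(W)`. -/
def dq (a : MW k N) : MW k N := a * pM k N - pM k N * a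

/-- Evaluation of a polynomial at `p`, i.e. the embedding `k[p] → W`. -/
def polyP : Polynomial k →ₐ[k] WeylA k := Polynomial.aeval (pW k)

/-- Evaluation of a polynomial at `q`, i.e. the embedding `k[q] → W`. -/
def polyQ : Polynomial k →ₐ[k] WeylA k := Polynomial.aeval (qW k)


/-- `θ` is continuous in the `q`-topology (defined by the left ideals
`M_N(W)·q^n`). -/
def QContinuous (N : ℕ) (θ : MW k N ≃ₐ[k] MW k N) : Prop :=
  ∀ n : ℕ, ∃ m : ℕ, ∀ x : MW k N,
    (∃ y : MW k N, x = y * qM k N ^ m) → ∃ z : MW k N, θ x = z * qM k N ^ n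

lemma polyP_apply' (g f : Polynomial k) :
    ((polyP k g : WeylA k) : Module.End k (Polynomial k)) f = g * f := by
  have h1 : ((polyP k g : WeylA k) : Module.End k (Polynomial k))
      = Polynomial.aeval (pOp k) g := by
    unfold polyP
    exact Polynomial.aeval_subalgebra_coe g (WeylA k) (pW k)
  have h2 : pOp k = Algebra.lmul k (Polynomial k) X := rfl
  rw [h1, h2, Polynomial.aeval_algHom_apply]
  simp

lemma polyP_inj : Function.Injective (polyP k) := by
  intro a b hab
  have := polyP_apply' k a 1
  rw [hab, polyP_apply'] at this
  simpa using this.symm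

lemma polyP_X : polyP k X = pW k := by simp [polyP]

lemma comm_pW (w : WeylA k) (hw : w * pW k = pW k * w) : ∃ g, w = polyP k g := by
  refine ⟨(w : Module.End k (Polynomial k)) 1, ?_⟩
  have hX : ∀ f, (w : Module.End k (Polynomial k)) (X * f)
      = X * (w : Module.End k (Polynomial k)) f := by
    intro f
    have := congrArg (fun u : WeylA k => (u : Module.End k (Polynomial k)) f) hw
    exact this
  apply Subtype.ext
  apply LinearMap.ext
  intro f
  rw [polyP_apply']
  induction f using Polynomial.induction_on' with
  | add a b ha hb => rw [map_add, ha, hb, mul_add]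
  | monomial n c =>
    rw [← C_mul_X_pow_eq_monomial, ← smul_eq_C_mul, map_smul, mul_smul_comm]
    congr 1
    induction n with
    | zero => simp
    | succ n ih => rw [pow_succ', hX, ih]; ring

lemma qW_polyP (g : Polynomial k) :
    qW k * polyP k g = polyP k g * qW k + polyP k (derivative g) := by
  apply Subtype.ext
  apply LinearMap.ext
  intro f
  have h1 : ((qW k * polyP k g : WeylA k) : Module.End k (Polynomial k)) f
     = derivative (((polyP k g : WeylA k) : Module.End k (Polynomial k)) f) := rfl
  have h2 : ((polyP k g * qW k + polyP k (derivative g) : WeylA k) : Module.End k (Polynomial k)) f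
     = ((polyP k g : WeylA k) : Module.End k (Polynomial k)) (derivative f) +
      ((polyP k (derivative g) : WeylA k) : Module.End k (Polynomial k)) f := rfl
  rw [h1, h2]
  simp only [polyP_apply', derivative_mul]
  ring

/-- embedding of polynomial matrices -/
def iM : Matrix (Fin N) (Fin N) (Polynomial k) →ₐ[k] MW k N := (polyP k).mapMatrix

lemma iM_eq (B : Matrix (Fin N) (Fin N) (Polynomial k)) : B.map (polyP k) = iM k N B := rfl

lemma iM_inj : Function.Injective (iM k N) := by
  intro a b hab
  exact Matrix.map_injective (polyP_inj k) hab

lemma iM_scalar (g : Polynomial k) :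
    iM k N (Matrix.diagonal fun _ => g) = Matrix.diagonal fun _ => polyP k g := by
  rw [← iM_eq, Matrix.diagonal_map (map_zero _)]

lemma comm_pM (a : MW k N) (ha : a * pM k N = pM k N * a) : ∃ B, a = iM k N B := by
  have : ∀ i j, ∃ g, a i j = polyP k g := by
    intro i j
    apply comm_pW
    have := congrFun (congrFun ha i) j
    simpa [pM, Matrix.mul_diagonal, Matrix.diagonal_mul] using this
  choose B hB using this
  exact ⟨Matrix.of B, by ext1 i j; rw [hB]; rfl⟩

lemma pM_eq : pM k N = iM k N (Matrix.diagonal fun _ => X) := by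
  rw [iM_scalar, polyP_X]; rfl

lemma iM_comm (B : Matrix (Fin N) (Fin N) (Polynomial k)) :
    iM k N B * pM k N = pM k N * iM k N B := by
  rw [pM_eq, ← map_mul, ← map_mul]
  congr 1
  ext1 i j
  simp [Matrix.mul_diagonal, Matrix.diagonal_mul, mul_comm]

lemma qM_iM (B : Matrix (Fin N) (Fin N) (Polynomial k)) :
    qM k N * iM k N B = iM k N B * qM k N + iM k N (B.map derivative) := by
  ext1 i j
  have := qW_polyP k (B i j)
  simpa [qM, Matrix.mul_diagonal, Matrix.diagonal_mul, ← iM_eq] using this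

lemma qM_E (i j : Fin N) :
    qM k N * iM k N (Matrix.single i j 1) = iM k N (Matrix.single i j 1) * qM k N := by
  rw [qM_iM]
  have : (Matrix.single i j (1 : Polynomial k)).map derivative = 0 := by
    ext1 a b
    simp only [Matrix.map_apply, Matrix.single_apply, Matrix.zero_apply]
    split_ifs <;> simp
  rw [this, map_zero, add_zero]

lemma comm_E (hN : 0 < N) (B : Matrix (Fin N) (Fin N) (Polynomial k))
    (hB : ∀ i j, iM k N B * iM k N (Matrix.single i j 1)
      = iM k N (Matrix.single i j 1) * iM k N B) :
    ∃ g, B = Matrix.diagonal fun _ => g := by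
  have h1 : ∀ i j, B * Matrix.single i j 1 = Matrix.single i j 1 * B := by
    intro i j
    apply iM_inj
    rw [map_mul, map_mul, hB]
  have : B ∈ Set.range (Matrix.scalar (Fin N)) := by
    apply Matrix.mem_range_scalar_of_commute_single
    intro i j _
    exact (h1 i j).symm
  obtain ⟨g, hg⟩ := this
  exact ⟨g, by rw [← hg]; rfl⟩

lemma center_MW (hN : 0 < N) (c : MW k N) (hc : ∀ a, c * a = a * c) :
    ∃ α : k, c = iM k N (Matrix.diagonal fun _ => C α) := by
  obtain ⟨B, rfl⟩ := comm_pM k N c (hc _)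
  obtain ⟨g, rfl⟩ := comm_E k N hN B (fun i j => hc _)
  have h1 := qM_iM k N (Matrix.diagonal fun _ => g)
  rw [hc, left_eq_add] at h1
  have h2 := iM_inj k N (h1.trans (map_zero _).symm)
  have h3 : derivative g = 0 := by
    have := congrFun (congrFun h2 ⟨0, hN⟩) ⟨0, hN⟩
    simpa using this
  refine ⟨g.coeff 0, ?_⟩
  rw [← Polynomial.eq_C_of_derivative_eq_zero h3]

lemma q_absorb (n : ℕ) : ∀ B : Matrix (Fin N) (Fin N) (Polynomial k),
    ∃ m, ∃ z, qM k N ^ m * iM k N B = z * qM k N ^ n := by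
  induction n with
  | zero => intro B; exact ⟨0, iM k N B, by simp⟩
  | succ n ihn =>
    have key : ∀ d : ℕ, ∀ B : Matrix (Fin N) (Fin N) (Polynomial k),
        (∀ i j, (B i j).degree < d) →
        ∃ m, ∃ z, qM k N ^ m * iM k N B = z * qM k N ^ (n + 1) := by
      intro d
      induction d with
      | zero =>
        intro B hB
        have : B = 0 := by
          ext1 i j
          have := hB i j
          simpa using this
        exact ⟨0, 0, by simp [this]⟩
      | succ d ihd =>
        intro B hB
        obtain ⟨m1, z1, h1⟩ := ihd (B.map derivative) (by
          intro i j
          rw [Matrix.map_apply]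
          by_cases h0 : B i j = 0
          · rw [h0]; simp
          · have a := Polynomial.degree_derivative_lt h0
            have b := hB i j
            have b' : (B i j).degree ≤ d := by
              rw [Polynomial.degree_eq_natDegree h0] at b ⊢
              norm_cast at b ⊢
              omega
            exact lt_of_lt_of_le a b')
        obtain ⟨m2, z2, h2⟩ := ihn B
        refine ⟨m1 + m2 + 1, qM k N ^ m1 * z2 + qM k N ^ m2 * z1, ?_⟩
        rw [pow_succ, mul_assoc, qM_iM, mul_add, add_mul]
        congr 1
        · rw [pow_add, ← mul_assoc, mul_assoc (qM k N ^ m1), h2, pow_succ]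
          simp only [mul_assoc]
        · rw [add_comm m1, pow_add, mul_assoc, h1, mul_assoc]
    intro B
    refine key ((Finset.univ.sup fun i => Finset.univ.sup fun j => (B i j).natDegree) + 1) B ?_
    intro i j
    refine lt_of_le_of_lt Polynomial.degree_le_natDegree ?_
    norm_cast
    apply Nat.lt_succ_of_le
    exact (Finset.le_sup (f := fun j => (B i j).natDegree) (Finset.mem_univ j)).trans
      (Finset.le_sup (f := fun i => Finset.univ.sup fun j => (B i j).natDegree) (Finset.mem_univ i))

lemma op_ne_zero (h : Polynomial k) (hh : h ≠ 0) (f : Polynomial k) (hf : f ≠ 0) :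
    derivative f - h * f ≠ 0 := by
  intro h0
  have h1 := sub_eq_zero.mp h0
  have h2 := Polynomial.degree_derivative_lt hf
  rw [h1, mul_comm] at h2
  exact absurd (Polynomial.degree_le_mul_left f hh) (not_le.mpr h2)

lemma pow_op (h : Polynomial k) (hh : h ≠ 0) (m : ℕ) (f : Polynomial k)
    (h0 : (((qW k - polyP k h) ^ m : WeylA k) : Module.End k (Polynomial k)) f = 0) : f = 0 := by
  induction m generalizing f with
  | zero => simpa using h0
  | succ m ih =>
    by_contra hf
    rw [pow_succ] at h0
    have h1 : (((qW k - polyP k h) ^ m * (qW k - polyP k h) : WeylA k) :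
        Module.End k (Polynomial k)) f
      = (((qW k - polyP k h) ^ m : WeylA k) : Module.End k (Polynomial k))
        (derivative f - ((polyP k h : WeylA k) : Module.End k (Polynomial k)) f) := rfl
    rw [h1, polyP_apply'] at h0
    exact op_ne_zero k h hh f hf (ih _ h0)

open Matrix in
/-- Matrix units in a matrix ring over a PID are conjugate to the standard ones. -/
lemma matrix_units {R : Type*} [CommRing R] [IsDomain R] [IsPrincipalIdealRing R]
    (N : ℕ) (hN : 0 < N) (F : Fin N → Fin N → Matrix (Fin N) (Fin N) R)
    (h1 : ∑ i, F i i = 1) (h2 : ∀ i j l, F i j * F j l = F i l)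
    (h3 : ∀ i j l m, j ≠ l → F i j * F l m = 0) :
    ∃ P Q : Matrix (Fin N) (Fin N) R, Q * P = 1 ∧ P * Q = 1 ∧
      ∀ i j, F i j = P * Matrix.single i j 1 * Q := by
  let o : Fin N := ⟨0, hN⟩
  let M : Submodule R (Fin N → R) := LinearMap.range (F o o).mulVecLin
  have hM : ∀ x : M, F o o *ᵥ (x : Fin N → R) = x := by
    rintro ⟨_, y, rfl⟩
    simp [h2]
  have hx : ∀ x : Fin N → R, ∑ i, F i i *ᵥ x = x := by
    intro x
    rw [← Matrix.sum_mulVec, h1, Matrix.one_mulVec]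
  let e : (Fin N → R) ≃ₗ[R] (Fin N → M) :=
    { toFun := fun x i => ⟨F o i *ᵥ x, F o i *ᵥ x, by simp [h2]⟩
      map_add' := by intro x y; ext i : 2; simp [Matrix.mulVec_add]
      map_smul' := by intro r x; ext i : 2; simp [Matrix.mulVec_smul]
      invFun := fun y => ∑ i, F i o *ᵥ (y i : Fin N → R)
      left_inv := by
        intro x
        simp only [Matrix.mulVec_mulVec, h2]
        exact hx x
      right_inv := by
        intro y
        ext i : 2
        simp only [Matrix.mulVec_sum, Matrix.mulVec_mulVec]
        rw [Finset.sum_eq_single i]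
        · rw [h2, hM]
        · intro j _ hj
          rw [h3 _ _ _ _ hj.symm, Matrix.zero_mulVec]
        · simp }
  have hr : Module.finrank R M = 1 := by
    have := e.finrank_eq
    have h4 : Module.finrank R (Fin N → M) = ∑ _i : Fin N, Module.finrank R M :=
      Module.finrank_pi_fintype R
    rw [h4] at this
    simp only [Module.finrank_fintype_fun_eq_card, Fintype.card_fin, Finset.sum_const,
      Finset.card_univ, smul_eq_mul] at this
    exact (Nat.eq_of_mul_eq_mul_left hN (by rw [mul_one]; exact this)).symm
  obtain ⟨v, hv⟩ : ∃ v : M, ∀ w : M, ∃ c : R, c • v = w := by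
    let b := Module.finBasisOfFinrankEq R M hr
    refine ⟨b 0, fun w => ⟨b.repr w 0, ?_⟩⟩
    have := b.sum_repr w
    simpa using this
  let P : Matrix (Fin N) (Fin N) R := Matrix.of fun a i => (F i o *ᵥ (v : Fin N → R)) a
  have hP : ∀ c : Fin N → R, P *ᵥ c = ∑ i, c i • (F i o *ᵥ (v : Fin N → R)) := by
    intro c
    ext a
    simp [P, Matrix.mulVec, dotProduct, mul_comm]
  have hs : Function.Surjective P.mulVec := by
    intro x
    choose c hc using fun i => hv (e x i)
    refine ⟨c, ?_⟩
    rw [hP, ← e.symm_apply_apply x]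
    change _ = ∑ i, F i o *ᵥ (e x i : Fin N → R)
    refine Finset.sum_congr rfl fun i _ => ?_
    rw [← hc i]
    simp [Matrix.mulVec_smul]
  obtain ⟨Q, hQ⟩ := Matrix.mulVec_surjective_iff_exists_right_inverse.mp hs
  have hQ' : Q * P = 1 := mul_eq_one_comm.mp hQ
  refine ⟨P, Q, hQ', hQ, ?_⟩
  intro i j
  have : F i j * P = P * Matrix.single i j 1 := by
    ext a l
    have hl : (F i j * P) a l = (F i j *ᵥ (F l o *ᵥ (v : Fin N → R))) a := rfl
    rw [hl, Matrix.mulVec_mulVec]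
    by_cases hjl : j = l
    · subst hjl
      rw [h2, Matrix.mul_single_apply_same]
      simp [P]
    · rw [h3 _ _ _ _ hjl, Matrix.mul_single_apply_of_ne _ _ _ _ _ (Ne.symm hjl)]
      simp
  rw [← this, mul_assoc, hQ, mul_one]

lemma ring_exists_add {R : Type*} [Ring R] (a b : R) : ∃ c, a = b + c := ⟨a - b, by abel⟩

lemma ring_exists_sub {R : Type*} [Ring R] (a b : R) : ∃ c, b = a + c := ⟨b - a, by abel⟩

lemma ring_comm_of {R : Type*} [Ring R] (a p c d : R) (h1 : a * p = p * a + d)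
    (h2 : a * (p + c) = (p + c) * a + d) : c * a = a * c := by
  rw [mul_add, add_mul, h1] at h2
  have : p * a + d + a * c = p * a + d + c * a := by rw [h2]; abel
  exact (add_left_cancel this).symm

lemma ring_comm_of' {R : Type*} [Ring R] (q q' H p d : R) (h1 : q * p = p * q + d)
    (h2 : q' * p = p * q' + d) (h : q = q' + H) : H * p = p * H := by
  subst h
  rw [mul_add, add_mul, h2] at h1
  have : p * q' + d + H * p = p * q' + d + p * H := by rw [h1]; abel
  exact add_left_cancel this

lemma dq_eq_iff (a c : MW k N) : dq k N a = c ↔ a * pM k N = pM k N * a + c := by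
  exact sub_eq_iff_eq_add' (a := a * pM k N) (b := pM k N * a) (c := c)

lemma sub_form (q' : MW k N) (h : Polynomial k)
    (e : qM k N = q' + iM k N (Matrix.diagonal fun _ => h)) :
    q' = qM k N - Matrix.diagonal fun _ => polyP k h := by
  rw [iM_scalar] at e
  exact eq_sub_of_add_eq (G := MW k N) (a := q') (c := Matrix.diagonal fun _ => polyP k h)
    (b := qM k N) e.symm

lemma entry_form (h : Polynomial k) :
    (qM k N - Matrix.diagonal fun _ => polyP k h : MW k N)
      = Matrix.diagonal fun _ => (qW k - polyP k h) := by
  unfold qM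
  ext1 i j
  rw [Matrix.sub_apply]
  by_cases hij : i = j
  · subst hij
    simp only [Matrix.diagonal_apply_eq]
  · simp only [Matrix.diagonal_apply_ne _ hij]
    exact sub_self (0 : WeylA k)

lemma cont_imp (hN : 0 < N) (h : Polynomial k) (Q Qinv : Matrix (Fin N) (Fin N) (Polynomial k))
    (hQ : Q * Qinv = 1) (m : ℕ) (z : MW k N)
    (hz : (qM k N - Matrix.diagonal fun _ => polyP k h : MW k N) ^ m * iM k N Q
      = z * qM k N) : h = 0 := by
  by_contra hh
  have hQ0 : Q = 0 := by
    ext1 i j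
    rw [entry_form, Matrix.diagonal_pow] at hz
    have h1 := congrFun (congrFun hz i) j
    unfold qM at h1
    rw [Matrix.diagonal_mul, Matrix.mul_diagonal] at h1
    have h2 := congrArg (fun u : WeylA k => (u : Module.End k (Polynomial k)) 1) h1
    have h3 : (((z i j * qW k : WeylA k)) : Module.End k (Polynomial k)) 1 = 0 := by
      change ((z i j : WeylA k) : Module.End k (Polynomial k)) (derivative 1) = 0
      rw [derivative_one, map_zero]
    have h4 := h2.trans h3
    have h5 : (((qW k - polyP k h) ^ m : WeylA k) : Module.End k (Polynomial k))
      (((polyP k (Q i j) : WeylA k) : Module.End k (Polynomial k)) 1) = 0 := h4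
    rw [polyP_apply', mul_one] at h5
    exact pow_op k h hh m _ h5
  rw [hQ0, zero_mul] at hQ
  have := congrFun (congrFun hQ ⟨0, hN⟩) ⟨0, hN⟩
  simp at this

lemma ring_conj_pow (P Q a : MW k N) (hQP : Q * P = 1) (hPQ : P * Q = 1) (m : ℕ) :
    (P * a * Q) ^ m = P * a ^ m * Q := by
  induction m with
  | zero => rw [pow_zero, pow_zero, mul_one, hPQ]
  | succ m ih =>
    rw [pow_succ, ih, pow_succ]
    calc P * a ^ m * Q * (P * a * Q) = P * a ^ m * (Q * P) * a * Q := by simp only [mul_assoc]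
      _ = _ := by rw [hQP, mul_one]; simp only [mul_assoc]

/-- Theorem 3.3.5: every `∂_q`-invariant automorphism of `M_N(W)` is of the
form `θ_{α,Q,h} : a(p,q) ↦ Q⁻¹(p)·a(p+α, q-h(p))·Q(p)`; it is continuous in
the `q`-topology iff `h = 0`. -/
theorem dq_invariant_automorphism_classification [IsAlgClosed k] (N : ℕ) (hN : 0 < N)
    (θ : MW k N ≃ₐ[k] MW k N)
    (hθ : ∀ a : MW k N, θ (dq k N a) = dq k N (θ a)) :
    ∃ (α : k) (h : Polynomial k) (Q Qinv : Matrix (Fin N) (Fin N) (Polynomial k)),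
      Q * Qinv = 1 ∧ Qinv * Q = 1 ∧
      θ (qM k N) =
        Qinv.map (polyP k) * (qM k N - Matrix.diagonal fun _ => polyP k h) *
          Q.map (polyP k) ∧
      (∀ B : Matrix (Fin N) (Fin N) (Polynomial k),
        θ (B.map (polyP k)) =
          (Qinv * B.map (fun b => b.comp (X + C α)) * Q).map (polyP k)) ∧
      (QContinuous k N θ ↔ h = 0) := by
  have hθ' : ∀ a c, a * pM k N = pM k N * a + c → θ a * pM k N = pM k N * θ a + θ c := by
    intro a c h
    rw [← dq_eq_iff] at h ⊢
    rw [← hθ, h]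
  obtain ⟨c, hc⟩ := ring_exists_add (θ (pM k N)) (pM k N)
  obtain ⟨α, hα⟩ := center_MW k N hN c (by
    intro b
    obtain ⟨a, rfl⟩ := θ.surjective b
    obtain ⟨d, hd⟩ := ring_exists_add (a * pM k N) (pM k N * a)
    refine ring_comm_of _ (pM k N) _ (θ d) (hθ' _ _ hd) ?_
    rw [← hc, ← map_mul, ← map_mul, ← map_add, hd])
  have hpα : θ (pM k N) = iM k N (Matrix.diagonal fun _ => (X + C α)) := by
    rw [hc, hα, pM_eq, ← map_add, Matrix.diagonal_add]
  have hpres : ∀ B, ∃ B', θ (iM k N B) = iM k N B' := by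
    intro B
    apply comm_pM
    have h := hθ' (iM k N B) 0 (by rw [iM_comm, add_zero])
    rwa [map_zero, add_zero] at h
  choose ψ hψ using hpres
  have hψmul : ∀ A B, ψ (A * B) = ψ A * ψ B := by
    intro A B
    apply iM_inj
    rw [← hψ, map_mul, map_mul, hψ, hψ, map_mul]
  have hψ0 : ψ 0 = 0 := by
    apply iM_inj
    rw [← hψ]; simp only [map_zero]
  obtain ⟨P, Q, hQP, hPQ, hF⟩ := matrix_units N hN (fun i j => ψ (Matrix.single i j 1))
    (by
      apply iM_inj
      rw [map_sum]
      simp only [← hψ]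
      rw [← map_sum, ← map_sum, Matrix.sum_single_one, map_one, map_one])
    (by
      intro i j l
      rw [← hψmul, Matrix.single_mul_single_same, mul_one])
    (by
      intro i j l m hjl
      rw [← hψmul, Matrix.single_mul_single_of_ne _ _ _ _ hjl, hψ0])
  have hE : ∀ i j, θ (iM k N (Matrix.single i j 1)) =
      iM k N P * iM k N (Matrix.single i j 1) * iM k N Q := by
    intro i j
    rw [hψ, ← map_mul, ← map_mul, ← hF]
  have hQP' : iM k N Q * iM k N P = 1 := by rw [← map_mul, hQP, map_one]
  have hPQ' : iM k N P * iM k N Q = 1 := by rw [← map_mul, hPQ, map_one]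
  have hq0 : qM k N * pM k N = pM k N * qM k N + 1 := by
    rw [pM_eq, qM_iM]
    have : (Matrix.diagonal fun _ : Fin N => (X : Polynomial k)).map derivative = 1 := by
      rw [Matrix.diagonal_map (map_zero _)]
      simp
    rw [this, map_one]
  have hq1 : θ (qM k N) * pM k N = pM k N * θ (qM k N) + 1 := by
    have h := hθ' _ _ hq0
    rwa [map_one] at h
  -- conjugated image of q
  obtain ⟨q', hq'⟩ : ∃ q', q' = iM k N Q * θ (qM k N) * iM k N P := ⟨_, rfl⟩
  have hq'p : q' * pM k N = pM k N * q' + 1 := by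
    rw [hq', mul_assoc, iM_comm, ← mul_assoc, mul_assoc (iM k N Q), hq1, mul_add, add_mul,
      mul_one, hQP', ← mul_assoc, iM_comm]
    simp only [mul_assoc]
  have hθq : θ (qM k N) = iM k N P * q' * iM k N Q := by
    rw [hq']
    calc θ (qM k N) = 1 * θ (qM k N) * 1 := by rw [one_mul, mul_one]
      _ = _ := by rw [← hPQ']; simp only [mul_assoc]
  have hq'E : ∀ i j, q' * iM k N (Matrix.single i j 1) = iM k N (Matrix.single i j 1) * q' := by
    intro i j
    have e1 : iM k N Q * θ (iM k N (Matrix.single i j 1)) =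
        iM k N (Matrix.single i j 1) * iM k N Q := by
      rw [hE, ← mul_assoc, ← mul_assoc, hQP', one_mul]
    have e2 : θ (iM k N (Matrix.single i j 1)) * iM k N P =
        iM k N P * iM k N (Matrix.single i j 1) := by
      rw [hE, mul_assoc, hQP', mul_one]
    have e3 := congrArg θ (qM_E k N i j)
    rw [map_mul, map_mul] at e3
    rw [hq', mul_assoc, ← e2, ← mul_assoc, mul_assoc (iM k N Q), e3, ← mul_assoc, e1]
    simp only [mul_assoc]
  obtain ⟨H, hH⟩ := ring_exists_add (qM k N) q'
  obtain ⟨B, rfl⟩ := comm_pM k N H (ring_comm_of' _ _ _ _ _ hq0 hq'p hH)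
  obtain ⟨h, rfl⟩ := comm_E k N hN B (fun i j =>
    ring_comm_of' _ _ _ _ 0 (by rw [add_zero]; exact qM_E k N i j)
      (by rw [add_zero]; exact hq'E i j) hH)
  have hform := sub_form k N q' h hH
  refine ⟨α, h, Q, P, hQP, hPQ, ?_, ?_, ?_⟩
  · rw [← hform]; exact hθq
  · have hs : ∀ b : Polynomial k, θ (iM k N (Matrix.diagonal fun _ => b)) =
        iM k N (Matrix.diagonal fun _ => b.comp (X + C α)) := by
      let f1 : Polynomial k →ₐ[k] MW k N :=
        (θ : MW k N →ₐ[k] MW k N).comp ((iM k N).comp (Matrix.scalarAlgHom (Fin N) k))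
      let f2 : Polynomial k →ₐ[k] MW k N :=
        ((iM k N).comp (Matrix.scalarAlgHom (Fin N) k)).comp (Polynomial.aeval (X + C α))
      have : f1 = f2 := by
        apply Polynomial.algHom_ext
        change θ (iM k N (Matrix.diagonal fun _ => X)) =
          iM k N (Matrix.diagonal fun _ => Polynomial.aeval (X + C α) X)
        rw [← pM_eq, hpα, Polynomial.aeval_X]
      intro b
      exact congrArg (fun g => g b) this
    intro B
    rw [iM_eq, iM_eq, map_mul, map_mul]
    have hd : ∀ B : Matrix (Fin N) (Fin N) (Polynomial k),
        B = ∑ i, ∑ j, (Matrix.diagonal fun _ => B i j) * Matrix.single i j 1 := by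
      intro B
      conv_lhs => rw [Matrix.matrix_eq_sum_single B]
      refine Finset.sum_congr rfl fun i _ => Finset.sum_congr rfl fun j _ => ?_
      ext1 a b
      simp [Matrix.diagonal_mul, Matrix.single_apply]
    conv_lhs => rw [hd B]
    conv_rhs => rw [hd (B.map fun b => b.comp (X + C α))]
    simp only [map_sum, map_mul, Finset.mul_sum, Finset.sum_mul]
    refine Finset.sum_congr rfl fun i _ => Finset.sum_congr rfl fun j _ => ?_
    rw [hs, hE, Matrix.map_apply]
    have hcm : ∀ (g : Polynomial k) (A : Matrix (Fin N) (Fin N) (Polynomial k)),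
        iM k N (Matrix.diagonal fun _ => g) * iM k N A
          = iM k N A * iM k N (Matrix.diagonal fun _ => g) := by
      intro g A
      rw [← map_mul, ← map_mul]
      congr 1
      ext1 a b
      simp [Matrix.diagonal_mul, Matrix.mul_diagonal, mul_comm]
    rw [← mul_assoc, ← mul_assoc, hcm]
    simp only [mul_assoc]
  · constructor
    · intro hc
      obtain ⟨m, hm⟩ := hc 1
      obtain ⟨y, hy⟩ := θ.surjective (iM k N Q)
      obtain ⟨z, hz⟩ := hm _ ⟨y, rfl⟩
      apply cont_imp k N hN h Q P hQP m z
      rw [← hform]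
      rw [map_mul, map_pow, hy, hθq, ring_conj_pow k N _ _ _ hQP' hPQ', ← mul_assoc, ← mul_assoc, hQP',
        one_mul, pow_one] at hz
      exact hz
    · intro h0 n
      obtain ⟨m, z, hz⟩ := q_absorb k N n Q
      refine ⟨m, ?_⟩
      rintro _ ⟨y, rfl⟩
      have hqq : q' = qM k N := by
        rw [hH, h0]
        have : (Matrix.diagonal fun _ : Fin N => (0 : Polynomial k)) = 0 := Matrix.diagonal_zero
        rw [this, map_zero, add_zero]
      refine ⟨θ y * iM k N P * z, ?_⟩
      rw [map_mul, map_pow, hθq, hqq, ring_conj_pow k N _ _ _ hQP' hPQ', mul_assoc (iM k N P), hz]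
      simp only [mul_assoc]

end
end

section
/- Let S ⊆ M_N(W) be a finitely generated prime ∂_q-invariant subalgebra of Gel'fand–Kirillov dimension one such that the centralizer of k[p]·S in M_N(W) is the scalars k. Then there exists a matrix A ∈ M_N(k[p]) such that q + A lies in the center of S. -/
open Polynomial

set_option synthInstance.maxHeartbeats 1000000
set_option maxHeartbeats 1000000

noncomputable section

variable (k : Type*) [Field k] [CharZero k]

variable (N : ℕ)

variable {k} in
/-- `I` is a (two-sided) ideal of the (possibly non-unital) subalgebra `S`. -/
def IsIdealOf {N : ℕ} (S : NonUnitalSubalgebra k (MW k N)) (I : Set (MW k N)) : Prop :=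
  I ⊆ S ∧ (0 : MW k N) ∈ I ∧ (∀ x y, x ∈ I → y ∈ I → x + y ∈ I) ∧
    (∀ x ∈ I, -x ∈ I) ∧ ∀ x ∈ I, ∀ a ∈ S, a * x ∈ I ∧ x * a ∈ I

variable {k} in
/-- The (possibly non-unital) algebra `S` is prime. -/
def IsPrimeAlg {N : ℕ} (S : NonUnitalSubalgebra k (MW k N)) : Prop :=
  ∀ I J : Set (MW k N), IsIdealOf S I → IsIdealOf S J →
    (∀ x ∈ I, ∀ y ∈ J, x * y = 0) → I ⊆ {0} ∨ J ⊆ {0}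

variable {k} in
/-- The set of products of at most `n+1` factors from `F`. -/
def prodsUpTo {N : ℕ} (F : Set (MW k N)) : ℕ → Set (MW k N)
  | 0 => F
  | n + 1 => prodsUpTo F n ∪ {z | ∃ x ∈ prodsUpTo F n, ∃ y ∈ F, z = x * y}

variable {k} in
/-- `S` has Gel'fand–Kirillov dimension one: the growth of any finitely
generated subalgebra is at most linear, and not every finitely generated
subalgebra is finite dimensional (by the Bergman gap theorem this
characterizes `GKdim = 1`). -/
def GKdimOne {N : ℕ} (S : NonUnitalSubalgebra k (MW k N)) : Prop :=
  (∀ F : Finset (MW k N), (F : Set (MW k N)) ⊆ S → ∃ C : ℕ, ∀ n : ℕ,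
      Module.rank k (Submodule.span k (prodsUpTo (F : Set (MW k N)) n))
        ≤ ((C * (n + 1) : ℕ) : Cardinal)) ∧
  (∃ F : Finset (MW k N), (F : Set (MW k N)) ⊆ S ∧ ∀ C : ℕ, ∃ n : ℕ,
      ¬ Module.rank k (Submodule.span k (prodsUpTo (F : Set (MW k N)) n))
        ≤ ((C : ℕ) : Cardinal))

universe u

section
namespace CenterAux

variable {k : Type u} [Field k] {B : Type u} [Ring B] [Algebra k B]

/-- elementwise primeness -/
def PrimeElt (S : NonUnitalSubalgebra k B) : Prop :=
  ∀ x ∈ S, ∀ y ∈ S, (∀ s ∈ S, x * s * y = 0) → x = 0 ∨ y = 0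

/-- a linear-growth filtration of `S` -/
structure Growth (S : NonUnitalSubalgebra k B) (G : ℕ → Submodule k B) (C : ℕ) : Prop where
  le : ∀ n, ∀ x ∈ G n, x ∈ S
  ex : ∀ x ∈ S, ∃ n, x ∈ G n
  mono : Monotone G
  mul : ∀ n m, ∀ x ∈ G n, ∀ y ∈ G m, x * y ∈ G (n + m + 1)
  step : ∀ n, G (n + 1) ≤ G n ⊔ G n * G 0
  fin : ∀ n, Module.Finite k (G n)
  rank : ∀ n, Module.finrank k (G n) ≤ C * (n + 1)

/-- `S` is finite dimensional over `k`. -/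
def FD (S : NonUnitalSubalgebra k B) : Prop := Module.Finite k S.toSubmodule

/-- If `S` acts faithfully by right multiplication on a finite dimensional space. -/
lemma fd_of_right {S : NonUnitalSubalgebra k B} (U : Submodule k B) [Module.Finite k U]
    (hU : ∀ w ∈ U, ∀ y ∈ S, w * y ∈ U)
    (hf : ∀ y ∈ S, (∀ w ∈ U, w * y = 0) → y = 0) : FD S := by
  let f : S.toSubmodule →ₗ[k] (U →ₗ[k] U) :=
    { toFun := fun y => (LinearMap.mulRight k (y : B)).restrict (fun w hw => hU w hw y y.2)
      map_add' := fun a b => by ext w; exact mul_add _ _ _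
      map_smul' := fun c a => by ext w; exact mul_smul_comm _ _ _ }
  refine Module.Finite.of_injective f ?_
  refine (injective_iff_map_eq_zero f).2 fun y hy => ?_
  ext
  refine hf y y.2 fun w hw => ?_
  have := congrArg Subtype.val (LinearMap.congr_fun hy ⟨w, hw⟩)
  exact this

lemma fd_of_left {S : NonUnitalSubalgebra k B} (U : Submodule k B) [Module.Finite k U]
    (hU : ∀ w ∈ U, ∀ y ∈ S, y * w ∈ U)
    (hf : ∀ y ∈ S, (∀ w ∈ U, y * w = 0) → y = 0) : FD S := by
  let f : S.toSubmodule →ₗ[k] (U →ₗ[k] U) :=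
    { toFun := fun y => (LinearMap.mulLeft k (y : B)).restrict (fun w hw => hU w hw y y.2)
      map_add' := fun a b => by ext w; exact add_mul _ _ _
      map_smul' := fun c a => by ext w; exact smul_mul_assoc _ _ _ }
  refine Module.Finite.of_injective f ?_
  refine (injective_iff_map_eq_zero f).2 fun y hy => ?_
  ext
  refine hf y y.2 fun w hw => ?_
  have := congrArg Subtype.val (LinearMap.congr_fun hy ⟨w, hw⟩)
  exact this

/-- The subspace `a * G n`. -/
abbrev LM (a : B) (U : Submodule k B) : Submodule k B := U.map (LinearMap.mulLeft k a)

variable {S : NonUnitalSubalgebra k B} {G : ℕ → Submodule k B} {C : ℕ}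

lemma stab (hG : Growth S G C) (x : B) (n : ℕ) (h : LM x (G (n+1)) ≤ LM x (G n)) :
    ∀ m, LM x (G m) ≤ LM x (G n) := by
  have key : ∀ m, LM x (G (n + m)) ≤ LM x (G n) := by
    intro m
    induction m with
    | zero => exact le_rfl
    | succ m ih =>
      rintro _ ⟨v, hv, rfl⟩
      have hv' := hG.step (n + m) hv
      obtain ⟨a, ha, b, hb, rfl⟩ := Submodule.mem_sup.1 hv'
      rw [map_add]
      refine Submodule.add_mem _ (ih ⟨a, ha, rfl⟩) ?_
      clear hv hv'
      induction hb using Submodule.mul_induction_on' with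
      | mem_mul_mem y hy z hz =>
        obtain ⟨w, hw, hw'⟩ := ih ⟨y, hy, rfl⟩
        apply h
        refine ⟨w * z, hG.mul n 0 w hw z hz, ?_⟩
        simp only [LinearMap.mulLeft_apply] at hw' ⊢
        rw [← mul_assoc, hw', mul_assoc]
      | add y hy z hz h1 h2 => rw [map_add]; exact Submodule.add_mem _ h1 h2
  intro m
  rcases le_total n m with hnm | hnm
  · obtain ⟨j, rfl⟩ := Nat.exists_eq_add_of_le hnm
    exact key j
  · exact Submodule.map_mono (hG.mono hnm)

lemma growth_lower (hp : PrimeElt S) (hG : Growth S G C) (hinf : ¬ FD S) {x : B} (hx : x ∈ S)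
    (hx0 : x ≠ 0) (n : ℕ) : n + 1 ≤ Module.finrank k (LM x (G n)) := by
  have := hG.fin
  have strict : ∀ n, LM x (G n) < LM x (G (n+1)) := by
    intro n
    refine lt_of_le_not_ge (Submodule.map_mono (hG.mono (Nat.le_succ n))) fun h => hinf ?_
    have st := stab hG x n h
    refine fd_of_right (LM x (G n)) ?_ ?_
    · rintro _ ⟨w, hw, rfl⟩ y hy
      obtain ⟨m, hm⟩ := hG.ex y hy
      apply st (n + m + 1)
      exact ⟨w * y, hG.mul _ _ _ hw _ hm, by simp [mul_assoc]⟩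
    · intro y hy h0
      refine (hp x hx y hy fun s hs => ?_).resolve_left hx0
      obtain ⟨m, hm⟩ := hG.ex s hs
      exact h0 _ (st m ⟨s, hm, rfl⟩)
  induction n with
  | zero =>
    by_contra hlt
    have h0 : LM x (G 0) = ⊥ := by
      rw [← Submodule.finrank_eq_zero (R := k)]; omega
    have hz : ∀ v ∈ G 0, x * v = 0 := fun v hv => by
      have : x * v ∈ LM x (G 0) := ⟨v, hv, rfl⟩
      rw [h0] at this; simpa using this
    have h1 : LM x (G 1) ≤ LM x (G 0) := by
      rintro _ ⟨v, hv, rfl⟩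
      obtain ⟨a, ha, b, hb, rfl⟩ := Submodule.mem_sup.1 (hG.step 0 hv)
      rw [map_add]
      refine Submodule.add_mem _ ⟨a, ha, rfl⟩ ?_
      clear hv
      induction hb using Submodule.mul_induction_on' with
      | mem_mul_mem y hy z hz' =>
        have : (LinearMap.mulLeft k x) (y * z) = 0 := by
          simp [← mul_assoc, hz y hy]
        rw [this]; exact Submodule.zero_mem _
      | add y hy z hz h1 h2 => rw [map_add]; exact Submodule.add_mem _ h1 h2
    exact (strict 0).not_ge h1
  | succ n ih =>
    have := Submodule.finrank_lt_finrank_of_lt (strict n)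
    omega

/-- Existence of an element whose corner is a domain. -/
lemma exists_corner (hp : PrimeElt S) (hG : Growth S G C) (hinf : ¬ FD S) :
    ∃ a ∈ S, a ≠ 0 ∧ ∀ s ∈ S, ∀ t ∈ S, a * s * a * t * a = 0 → a * s * a = 0 ∨ a * t * a = 0 := by
  classical
  have := hG.fin
  let P : ℕ → Prop := fun j => ∃ a ∈ S, a ≠ 0 ∧ ∃ e : ℕ, ∀ n, Module.finrank k (LM a (G n)) ≤ j * n + e
  have hS : ∃ a ∈ S, a ≠ 0 := by
    by_contra hcon
    push Not at hcon
    apply hinf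
    refine fd_of_right ⊥ ?_ ?_
    · intro w hw y _
      simp [(Submodule.mem_bot k).1 hw]
    · intro y hy _; exact hcon y hy
  have hP : ∃ j, P j := by
    obtain ⟨a, ha, ha0⟩ := hS
    refine ⟨C, a, ha, ha0, C, fun n => ?_⟩
    calc _ ≤ Module.finrank k (G n) := Submodule.finrank_map_le _ _
      _ ≤ C * (n + 1) := hG.rank n
      _ = _ := by ring
  obtain ⟨a, ha, ha0, e, he⟩ := Nat.find_spec hP
  have hmin := fun j => Nat.find_min (H := hP) (m := j)
  set j := Nat.find hP
  refine ⟨a, ha, ha0, fun s hs t ht h0 => ?_⟩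
  by_contra! hcon
  obtain ⟨h1, h2⟩ := hcon
  have hj : 0 < j := by
    by_contra hj
    have hj : j = 0 := by omega
    have := he e
    have := growth_lower hp hG hinf ha ha0 e
    rw [hj] at *
    omega
  refine hmin (j - 1) (by omega) ⟨a * s * a, S.mul_mem (S.mul_mem ha hs) ha, h1, ?_⟩
  have hta : t * a ∈ S := S.mul_mem ht ha
  obtain ⟨d, hd⟩ := hG.ex _ hta
  have hle : ∀ n, Module.finrank k (LM (a * s * a) (G n)) ≤ Module.finrank k (LM a (G n)) := by
    intro n
    have : LM (a * s * a) (G n) = LM (a * s) (LM a (G n)) := by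
      rw [LM, LM, LM, ← Submodule.map_comp]
      congr 1; ext v; simp [mul_assoc]
    rw [this]
    exact Submodule.finrank_map_le _ _
  have hdrop : ∀ n, Module.finrank k (LM (a * s * a) (G (n + d + 1))) + (n + 1)
      ≤ Module.finrank k (LM a (G (n + d + 1))) := by
    intro n
    set U := LM a (G (n + d + 1)) with hU
    let f : U →ₗ[k] B := (LinearMap.mulLeft k (a * s)).domRestrict U
    have hr : LinearMap.range f = LM (a * s * a) (G (n + d + 1)) := by
      rw [LinearMap.range_domRestrict, hU, LM, LM, ← Submodule.map_comp]
      congr 1; ext v; simp [mul_assoc]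
    have hk : n + 1 ≤ Module.finrank k (LinearMap.ker f) := by
      have hl := growth_lower hp hG hinf (S.mul_mem (S.mul_mem ha ht) ha) h2 n
      have hsub : LM (a * t * a) (G n) ≤ (LinearMap.ker f).map U.subtype := by
        rintro _ ⟨v, hv, rfl⟩
        refine ⟨⟨a * (t * a * v), ⟨t * a * v, ?_, rfl⟩⟩, ?_, ?_⟩
        · have := hG.mul _ _ _ hd _ hv
          rwa [add_comm d n] at this
        · simp only [SetLike.mem_coe, LinearMap.mem_ker, f, LinearMap.domRestrict_apply,
            LinearMap.mulLeft_apply]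
          have : a * s * (a * (t * a * v)) = (a * s * a * t * a) * v := by simp only [mul_assoc]
          rw [this, h0, zero_mul]
        · simp [mul_assoc]
      have := Submodule.finrank_mono hsub
      rw [Submodule.finrank_map_subtype_eq] at this
      omega
    have := LinearMap.finrank_range_add_finrank_ker f
    rw [hr] at this
    omega
  obtain ⟨j', hj'⟩ : ∃ j', j = j' + 1 := ⟨j - 1, by omega⟩
  refine ⟨e + d + 1, fun n => ?_⟩
  rw [hj', Nat.add_sub_cancel]
  rcases le_or_gt n (d + 1) with hn | hn
  · have h3 := (hle n).trans (he n)
    rw [hj', add_mul] at h3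
    omega
  · obtain ⟨n', rfl⟩ : ∃ n', n = n' + d + 1 := ⟨n - d - 1, by omega⟩
    have h3 := (hdrop n').trans (he _)
    rw [hj', add_mul] at h3
    omega

end CenterAux
end

section
namespace CenterAux

variable {k : Type u} [Field k] {B : Type u} [Ring B] [Algebra k B]
variable {S : NonUnitalSubalgebra k B} {G : ℕ → Submodule k B} {C : ℕ}

/-- The idealizer of `S`. -/
def idl (S : NonUnitalSubalgebra k B) : Subalgebra k B where
  carrier := {u | ∀ y ∈ S, y * u ∈ S ∧ u * y ∈ S}
  mul_mem' {a b} ha hb y hy := by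
    refine ⟨?_, ?_⟩
    · rw [← mul_assoc]; exact (hb _ (ha y hy).1).1
    · rw [mul_assoc]; exact (ha _ (hb y hy).2).2
  add_mem' {a b} ha hb y hy := by
    refine ⟨?_, ?_⟩
    · rw [mul_add]; exact S.add_mem (ha y hy).1 (hb y hy).1
    · rw [add_mul]; exact S.add_mem (ha y hy).2 (hb y hy).2
  algebraMap_mem' r y hy := by
    refine ⟨?_, ?_⟩
    · rw [← Algebra.commutes, ← Algebra.smul_def]; exact S.smul_mem r hy
    · rw [← Algebra.smul_def]; exact S.smul_mem r hy

lemma mem_idl_of_mem {x : B} (hx : x ∈ S) : x ∈ idl S :=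
  fun _ hy => ⟨S.mul_mem hy hx, S.mul_mem hx hy⟩

lemma aeval_induct (f : k[X]) (x : B) (T : Subalgebra k B) (hx : x ∈ T) : aeval x f ∈ T := by
  induction f using Polynomial.induction_on' with
  | add p q hp hq => rw [map_add]; exact T.add_mem hp hq
  | monomial n c =>
    rw [aeval_monomial]; exact T.mul_mem (T.algebraMap_mem c) (T.pow_mem hx n)

lemma aeval_mem_idl {x : B} (hx : x ∈ S) (f : k[X]) : aeval x f ∈ idl S :=
  aeval_induct f x (idl S) (mem_idl_of_mem hx)

/-- The corner condition. -/
def Corner (S : NonUnitalSubalgebra k B) (a : B) : Prop :=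
  ∀ s ∈ S, ∀ t ∈ S, a * s * a * t * a = 0 → a * s * a = 0 ∨ a * t * a = 0

lemma corner_dom (hp : PrimeElt S) {a : B} (ha : a ∈ S) (ha0 : a ≠ 0) (hc : Corner S a)
    {u v : B} (hu : u ∈ idl S) (hv : v ∈ idl S) (h : u * a * v = 0) : u * a = 0 ∨ a * v = 0 := by
  by_contra! hcon
  obtain ⟨h1, h2⟩ := hcon
  have hua : u * a ∈ S := (hu a ha).2
  have hav : a * v ∈ S := (hv a ha).1
  have e1 : ∃ y ∈ S, a * y * (u * a) ≠ 0 := by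
    by_contra! hn
    exact (hp a ha _ hua hn).elim ha0 h1
  have e2 : ∃ y ∈ S, (a * v) * y * a ≠ 0 := by
    by_contra! hn
    exact (hp _ hav a ha hn).elim h2 ha0
  obtain ⟨y, hy, hy0⟩ := e1
  obtain ⟨z, hz, hz0⟩ := e2
  have := hc (y * u) (hu y hy).1 (v * z) (hv z hz).2 (by
    have : a * (y * u) * a * (v * z) * a = a * y * (u * a * v) * (z * a) := by
      simp only [mul_assoc]
    rw [this, h]; simp)
  rcases this with h' | h'
  · exact hy0 (by rw [← h']; simp only [mul_assoc])
  · exact hz0 (by rw [← h']; simp only [mul_assoc])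

lemma mul_aeval_comm (a s : B) (f : k[X]) : a * aeval (s * a) f = aeval (a * s) f * a := by
  induction f using Polynomial.induction_on' with
  | add p q hp hq => simp [mul_add, add_mul, hp, hq]
  | monomial n c =>
    have : ∀ n, a * (s * a) ^ n = (a * s) ^ n * a := by
      intro n
      induction n with
      | zero => simp
      | succ n ih => rw [pow_succ, ← mul_assoc, ih, pow_succ]; simp only [mul_assoc]
    rw [aeval_monomial, aeval_monomial, ← mul_assoc, ← Algebra.commutes, mul_assoc, this,
      mul_assoc]

/-- Case two: the corner is `k`. -/
lemma corner_scalar [IsAlgClosed k] (hp : PrimeElt S) {a : B} (ha : a ∈ S) (ha0 : a ≠ 0)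
    (hc : Corner S a) {s : B} (hs : s ∈ S) (h : ∃ f : k[X], f ≠ 0 ∧ a * aeval (s * a) f = 0) :
    ∃ c : k, a * s * a = c • a := by
  classical
  have hex : ∃ n, ∃ f : k[X], f ≠ 0 ∧ a * aeval (s * a) f = 0 ∧ f.natDegree = n := by
    obtain ⟨f, h1, h2⟩ := h; exact ⟨_, f, h1, h2, rfl⟩
  obtain ⟨f, hf0, hf, hd⟩ := Nat.find_spec hex
  have hmin := fun j => Nat.find_min (H := hex) (m := j)
  set d := Nat.find hex
  have hdeg : f.degree ≠ 0 := by
    intro h0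
    rw [eq_C_of_degree_eq_zero h0] at hf
    rw [aeval_C, ← Algebra.commutes, ← Algebra.smul_def] at hf
    rcases smul_eq_zero.1 hf with h | h
    · rw [eq_C_of_degree_eq_zero h0, h] at hf0; simp at hf0
    · exact ha0 h
  obtain ⟨c, hcr⟩ := IsAlgClosed.exists_root f hdeg
  obtain ⟨g, hg⟩ := dvd_iff_isRoot.2 hcr
  have hg0 : g ≠ 0 := by rintro rfl; simp at hg; exact hf0 hg
  have hgd : g.natDegree < d := by
    rw [← hd, hg, natDegree_mul (X_sub_C_ne_zero c) hg0, natDegree_X_sub_C]; omega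
  have hu : a * s - algebraMap k B c ∈ idl S :=
    (idl S).sub_mem (mem_idl_of_mem (S.mul_mem ha hs)) ((idl S).algebraMap_mem c)
  have hv := aeval_mem_idl (S.mul_mem hs ha) g
  have key : (a * s - algebraMap k B c) * a * aeval (s * a) g = 0 := by
    rw [hg, aeval_mul, ← mul_assoc, mul_aeval_comm] at hf
    simpa using hf
  rcases corner_dom hp ha ha0 hc hu hv key with h | h
  · exact ⟨c, by rw [sub_mul, sub_eq_zero] at h; rw [h, Algebra.smul_def]⟩
  · exact absurd ⟨g, hg0, h, rfl⟩ (hmin _ hgd)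

lemma Growth.unif (hG : Growth S G C) {ι : Type*} [Fintype ι] (x : ι → B) (hx : ∀ i, x i ∈ S) :
    ∃ d, ∀ i, x i ∈ G d := by
  choose n hn using fun i => hG.ex (x i) (hx i)
  exact ⟨Finset.univ.sup n, fun i => hG.mono (Finset.le_sup (Finset.mem_univ i)) (hn i)⟩

/-- Case two is impossible. -/
lemma not_scalar_corner (hp : PrimeElt S) (hG : Growth S G C) (hinf : ¬ FD S)
    {a : B} (ha : a ∈ S) (ha0 : a ≠ 0) (h : ∀ s ∈ S, ∃ c : k, a * s * a = c • a) : False := by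
  classical
  let U : Submodule k B := S.toSubmodule.map (LinearMap.mulRight k a)
  have hU : ¬ Module.Finite k U := by
    intro hfin
    refine hinf (fd_of_left U ?_ ?_)
    · rintro _ ⟨x, hx, rfl⟩ y hy
      exact ⟨y * x, S.mul_mem hy hx, by simp [mul_assoc]⟩
    · intro y hy h0
      refine (hp y hy a ha fun s hs => ?_).resolve_right ha0
      have := h0 (s * a) ⟨s, hs, rfl⟩
      rw [mul_assoc]; exact this
  have hrk : (((C + 1 : ℕ) : Cardinal)) ≤ Module.rank k U := by
    by_contra hlt
    apply hU
    rw [← Module.rank_lt_aleph0_iff]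
    exact (not_le.1 hlt).trans (Cardinal.natCast_lt_aleph0)
  obtain ⟨t, ht, hli⟩ := le_rank_iff_exists_linearIndependent_finset.1 hrk
  have hch : ∀ i : t, ∃ u ∈ S, u * a = (i : U) := by
    rintro ⟨⟨_, x, hx, rfl⟩, _⟩
    exact ⟨x, hx, rfl⟩
  choose w hwS hwa using hch
  obtain ⟨d, hd⟩ := hG.unif w hwS
  obtain ⟨e, he⟩ := hG.ex a ha
  have hli2 : LinearIndependent k (fun i : t => w i * a) := by
    have := hli.map' U.subtype (Submodule.ker_subtype U)
    have h' : (fun i : t => w i * a) = fun i : t => ((i : U) : B) := funext hwa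
    rw [h']
    exact this
  have := hG.fin
  have main : ∀ n, (C + 1) * (n + 1) ≤ C * (d + (e + n + 1) + 1 + 1) := by
    intro n
    let f : (t → LM a (G n)) →ₗ[k] G (d + (e + n + 1) + 1) :=
      { toFun := fun v => ⟨∑ i, w i * (v i : B), by
          refine Submodule.sum_mem _ fun i _ => hG.mul _ _ _ (hd i) _ ?_
          obtain ⟨y, hy, hy'⟩ := (v i).2
          rw [← hy']
          exact hG.mul _ _ _ he _ hy⟩
        map_add' := fun v v' => by
          ext; simp [mul_add, Finset.sum_add_distrib]
        map_smul' := fun c v => by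
          ext; simp [Finset.smul_sum] }
    have hf : Function.Injective f := by
      refine (injective_iff_map_eq_zero f).2 fun v hv => ?_
      have hv' : ∑ i, w i * (v i : B) = 0 := congrArg Subtype.val hv
      have hvS : ∀ i, ∃ y ∈ S, a * y = v i := fun i => by
        obtain ⟨y, hy, hy'⟩ := (v i).2
        exact ⟨y, hG.le _ _ hy, hy'⟩
      choose y hyS hy using hvS
      funext i
      ext
      change ((v i : LM a (G n)) : B) = 0
      rw [← hy i]
      refine (hp _ (S.mul_mem ha (hyS i)) a ha fun z hz => ?_).resolve_right ha0
      have h1 : ∀ j, ∃ c : k, a * (y j * z) * a = c • a := fun j => h _ (S.mul_mem (hyS j) hz)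
      choose c hc using h1
      have h2 : ∑ j, c j • (w j * a) = 0 := by
        calc ∑ j, c j • (w j * a) = (∑ j, w j * (v j : B)) * (z * a) := by
              rw [Finset.sum_mul]
              refine Finset.sum_congr rfl fun j _ => ?_
              rw [← mul_smul_comm, ← hc, ← hy j]
              simp only [mul_assoc]
          _ = 0 := by rw [hv', zero_mul]
      have h3 := Fintype.linearIndependent_iff.1 hli2 c h2 i
      rw [mul_assoc a, hc, h3, zero_smul]
    have h1 := LinearMap.finrank_le_finrank_of_injective hf
    rw [Module.finrank_pi_fintype] at h1
    simp only [Finset.sum_const, Finset.card_univ, Fintype.card_coe, ht, smul_eq_mul] at h1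
    have h2 := growth_lower hp hG hinf ha ha0 n
    have h3 := hG.rank (d + (e + n + 1) + 1)
    calc _ ≤ _ := Nat.mul_le_mul_left _ h2
      _ ≤ _ := h1
      _ ≤ _ := h3
  have := main (C * (d + e + 3))
  nlinarith

/-- Case one: the rank of `S a` over `k[c]` is bounded. -/
lemma rank_bound (hG : Growth S G C) {c : B} (hcS : c ∈ S) :
    ∃ R : ℕ, ∀ (ι : Type u) [Fintype ι] (x : ι → B), (∀ i, x i ∈ S) →
      (∀ f : ι → k[X], ∑ i, x i * aeval c (f i) = 0 → f = 0) → Fintype.card ι ≤ R := by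
  classical
  obtain ⟨e, he⟩ := hG.ex c hcS
  refine ⟨C * (e + 1), fun ι _ x hx hind => ?_⟩
  obtain ⟨d, hd⟩ := hG.unif x hx
  have := hG.fin
  have hpow : ∀ i n, x i * c ^ n ∈ G (d + n * (e + 1)) := by
    intro i n
    induction n with
    | zero => simpa using hd i
    | succ n ih =>
      rw [pow_succ, ← mul_assoc]
      have := hG.mul _ _ _ ih _ he
      convert this using 2; ring
  have hmem : ∀ i n (f : degreeLT k n), x i * aeval c (f : k[X]) ∈ G (d + n * (e + 1)) := by
    intro i n f
    rw [aeval_eq_sum_range, Finset.mul_sum]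
    refine Submodule.sum_mem _ fun m hm => ?_
    rw [mul_smul_comm]
    by_cases hmn : m < n
    · exact Submodule.smul_mem _ _ (hG.mono (by gcongr) (hpow i m))
    · have : (f : k[X]).coeff m = 0 := by
        have := mem_degreeLT.1 f.2
        exact coeff_eq_zero_of_degree_lt (this.trans_le (by exact_mod_cast not_lt.1 hmn))
      rw [this, zero_smul]; exact Submodule.zero_mem _
  have main : ∀ n, Fintype.card ι * n ≤ C * (d + n * (e + 1) + 1) := by
    intro n
    let f : (ι → degreeLT k n) →ₗ[k] G (d + n * (e + 1)) :=
      { toFun := fun v => ⟨∑ i, x i * aeval c ((v i : k[X])),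
          Submodule.sum_mem _ fun i _ => hmem i n (v i)⟩
        map_add' := fun v v' => by
          ext; simp [mul_add, Finset.sum_add_distrib]
        map_smul' := fun c v => by
          ext; simp [Finset.smul_sum] }
    have hf : Function.Injective f := by
      refine (injective_iff_map_eq_zero f).2 fun v hv => ?_
      have hv' := congrArg Subtype.val hv
      have := hind (fun i => (v i : k[X])) hv'
      funext i
      ext1
      exact congrFun this i
    have h1 := LinearMap.finrank_le_finrank_of_injective hf
    rw [Module.finrank_pi_fintype] at h1
    have h0 : Module.finrank k (degreeLT k n) = n := by
      rw [(degreeLTEquiv k n).finrank_eq]; simp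
    simp only [h0, Finset.sum_const, Finset.card_univ, smul_eq_mul] at h1
    exact h1.trans (hG.rank _)
  by_contra hlt
  push Not at hlt
  have h1 := main (C * (d + 1) + 1)
  have h2 : (C * (e + 1) + 1) * (C * (d + 1) + 1) ≤ Fintype.card ι * (C * (d + 1) + 1) :=
    Nat.mul_le_mul_right _ hlt
  nlinarith

end CenterAux
end

section
namespace CenterAux

variable {k : Type u} [Field k] {B : Type u} [Ring B] [Algebra k B]
variable {S : NonUnitalSubalgebra k B} {G : ℕ → Submodule k B} {C : ℕ}

/-- Faithful representations of `S` over an extension `K` of `k`. -/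
structure IsRep (S : NonUnitalSubalgebra k B) {K : Type u} [Field K] (j : k →+* K)
    {V : Type u} [AddCommGroup V] [Module K V] (φ : S → Module.End K V) : Prop where
  add : ∀ x y, φ (x + y) = φ x + φ y
  mul : ∀ x y, φ (x * y) = φ x * φ y
  smul : ∀ (c : k) x, φ (c • x) = j c • φ x
  inj : ∀ x, φ x = 0 → x = 0

/-- There is a faithful finite dimensional representation of dimension `n`. -/
def HasRep (S : NonUnitalSubalgebra k B) {K : Type u} [Field K] (j : k →+* K) (n : ℕ) : Prop :=
  ∃ (V : Type u) (_ : AddCommGroup V) (_ : Module K V) (φ : S → Module.End K V),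
    Module.Finite K V ∧ Module.finrank K V = n ∧ IsRep S j φ

lemma exists_rep_of_poly (M : Type u) [AddCommGroup M] [Module k[X] M]
    (htf : ∀ (f : k[X]) (m : M), f • m = 0 → f = 0 ∨ m = 0)
    (R : ℕ) (hR : ∀ s : Finset M, LinearIndependent k[X] (fun i : s => (i : M)) → s.card ≤ R)
    (l : S → Module.End k[X] M)
    (hadd : ∀ x y, l (x + y) = l x + l y)
    (hmul : ∀ x y, l (x * y) = l x * l y)
    (hsmul : ∀ (c : k) x, l (c • x) = (Polynomial.C c) • l x)
    (hinj : ∀ x, l x = 0 → x = 0) :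
    ∃ (K : Type u) (_ : Field K) (_ : IsAlgClosed K) (j : k →+* K) (n : ℕ), HasRep S j n := by
  let K := AlgebraicClosure (FractionRing k[X])
  have hfs : FaithfulSMul k[X] K := by
    rw [faithfulSMul_iff_algebraMap_injective,
      IsScalarTower.algebraMap_eq k[X] (FractionRing k[X]) K]
    exact (algebraMap (FractionRing k[X]) K).injective.comp (IsFractionRing.injective _ _)
  have hflat : Module.Flat k[X] M := by
    rw [Module.Flat.flat_iff_torsion_eq_bot_of_isBezout, eq_bot_iff]
    rintro m ⟨⟨r, hr⟩, h⟩
    exact (htf r m h).resolve_left (nonZeroDivisors.ne_zero hr)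
  have hrank : Module.rank k[X] M ≤ R := rank_le hR
  have hbc := (TensorProduct.isBaseChange k[X] M K).rank_eq
  have hfin : Module.Finite K (TensorProduct k[X] K M) := by
    rw [← Module.rank_lt_aleph0_iff, hbc]
    exact hrank.trans_lt Cardinal.natCast_lt_aleph0
  refine ⟨K, inferInstance, inferInstance, (algebraMap k[X] K).comp Polynomial.C, _,
    TensorProduct k[X] K M, inferInstance, inferInstance,
    fun x => Module.End.baseChangeHom k[X] K M (l x), hfin, rfl, ?_⟩
  refine ⟨fun x y => ?_, fun x y => ?_, fun c x => ?_, fun x hx => ?_⟩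
  · rw [hadd, map_add]
  · rw [hmul, map_mul]
  · rw [hsmul, map_smul]
    simp [algebraMap_smul]
  · apply hinj
    exact LinearMap.baseChangeHom_injective k[X] M K (by rw [map_zero]; exact hx)

lemma exists_rep [IsAlgClosed k] (hp : PrimeElt S) (hG : Growth S G C) (hinf : ¬ FD S) :
    ∃ (K : Type u) (_ : Field K) (_ : IsAlgClosed K) (j : k →+* K) (n : ℕ), HasRep S j n := by
  classical
  obtain ⟨a, ha, ha0, hc⟩ := exists_corner hp hG hinf
  by_cases hcase : ∀ s ∈ S, ∃ f : k[X], f ≠ 0 ∧ a * aeval (s * a) f = 0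
  · exact (not_scalar_corner hp hG hinf ha ha0
      fun s hs => corner_scalar hp ha ha0 hc hs (hcase s hs)).elim
  push Not at hcase
  obtain ⟨s, hs, hsf⟩ := hcase
  set c := s * a with hcdef
  have hcS : c ∈ S := S.mul_mem hs ha
  let U : Submodule k B := S.toSubmodule.map (LinearMap.mulRight k a)
  have hUS : ∀ x : U, (x : B) ∈ S := by
    rintro ⟨_, x, hx, rfl⟩
    exact S.mul_mem hx ha
  have hUc : ∀ x ∈ U, (LinearMap.mulRight k c) x ∈ U := by
    rintro _ ⟨x, hx, rfl⟩
    exact ⟨x * a * s, S.mul_mem (S.mul_mem hx ha) hs, by simp [hcdef, mul_assoc]⟩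
  let ρ : Module.End k U := (LinearMap.mulRight k c).restrict hUc
  let M := Module.AEval' ρ
  let o : U ≃ₗ[k] M := Module.AEval'.of ρ
  have hpoly : ∀ (f : k[X]) (x : U), ((o.symm (f • o x) : U) : B) = (x : B) * aeval c f := by
    intro f
    induction f using Polynomial.induction_on with
    | C r =>
      intro x
      have : (Polynomial.C r : k[X]) • o x = r • o x := Module.AEval.C_smul _ _ _
      rw [this, map_smul, o.symm_apply_apply, aeval_C, ← Algebra.commutes, ← Algebra.smul_def]
      rfl
    | add p q hp hq => intro x; rw [add_smul, map_add, map_add, mul_add, ← hp, ← hq]; rfl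
    | monomial n r ih =>
      intro x
      have h1 : (Polynomial.C r * X ^ (n+1) : k[X]) • o x = (Polynomial.C r * X ^ n : k[X]) • o (ρ x) := by
        rw [pow_succ, ← mul_assoc, mul_smul]; congr 1
        exact Module.AEval'.X_smul_of ρ x
      rw [h1, ih]
      have h2 : ((ρ x : U) : B) = x * c := rfl
      rw [h2, mul_assoc]
      congr 1
      have h3 : (Polynomial.C r * X ^ (n+1) : k[X]) = X * (Polynomial.C r * X ^ n) := by ring
      rw [h3, aeval_mul (p := X), aeval_X]
  have hpoly' : ∀ (f : k[X]) (m : M), ((o.symm (f • m) : U) : B) = (o.symm m : U) * aeval c f := by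
    intro f m
    have := hpoly f (o.symm m)
    rwa [o.apply_symm_apply] at this
  have hleft : ∀ y : S, ∀ x ∈ U, (LinearMap.mulLeft k (y : B)) x ∈ U := by
    rintro y _ ⟨x, hx, rfl⟩
    exact ⟨y * x, S.mul_mem y.2 hx, by simp [mul_assoc]⟩
  let l : S → Module.End k[X] M := fun y =>
    { toFun := fun m => o ((LinearMap.mulLeft k (y : B)).restrict (hleft y) (o.symm m))
      map_add' := fun m m' => by simp only [map_add]
      map_smul' := fun f m => by
        apply o.symm.injective
        ext
        rw [RingHom.id_apply, hpoly', o.symm_apply_apply, o.symm_apply_apply]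
        change (y : B) * ((o.symm (f • m) : U) : B) = (y : B) * ((o.symm m : U) : B) * _
        rw [hpoly', mul_assoc] }
  have hl : ∀ y m, ((o.symm (l y m) : U) : B) = (y : B) * (o.symm m : U) := fun y m => by
    have h : l y m = o ((LinearMap.mulLeft k (y : B)).restrict (hleft y) (o.symm m)) := rfl
    rw [h, o.symm_apply_apply]; rfl
  have hext : ∀ m m' : M, ((o.symm m : U) : B) = (o.symm m' : U) → m = m' := fun m m' h =>
    o.symm.injective (Subtype.ext h)
  obtain ⟨R, hR⟩ := rank_bound hG hcS
  refine exists_rep_of_poly M ?_ R ?_ l ?_ ?_ ?_ ?_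
  · intro f m hfm
    by_contra! hcon
    obtain ⟨hf, hm⟩ := hcon
    have h0 : ((o.symm (f • m) : U) : B) = 0 := by rw [hfm, map_zero]; rfl
    rw [hpoly'] at h0
    obtain ⟨x, hx, hxm⟩ := (o.symm m).2
    rw [← hxm] at h0
    rcases corner_dom hp ha ha0 hc (mem_idl_of_mem hx) (aeval_mem_idl hcS f) h0 with h | h
    · apply hm
      apply hext
      rw [← hxm, map_zero]; exact h
    · exact hsf f hf h
  · intro t ht
    have := hR t (fun i => ((o.symm i : U) : B)) (fun i => hUS _) (fun f hf => by
      have := Fintype.linearIndependent_iff.1 ht f (by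
        apply hext
        rw [map_sum, map_zero]
        rw [AddSubmonoidClass.coe_finsetSum]
        simp only [hpoly']
        exact hf)
      funext i; exact this i)
    simpa using this
  · intro x y
    ext m
    apply hext
    rw [LinearMap.add_apply, map_add, Submodule.coe_add, hl, hl, hl]
    exact add_mul _ _ _
  · intro x y
    ext m
    apply hext
    rw [Module.End.mul_apply, hl, hl, hl]
    exact mul_assoc _ _ _
  · intro r x
    ext m
    apply hext
    rw [LinearMap.smul_apply, hpoly', hl, hl, aeval_C, ← Algebra.commutes, ← Algebra.smul_def]
    exact smul_mul_assoc _ _ _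
  · intro x hx
    ext
    refine (hp x x.2 a ha fun y hy => ?_).resolve_right ha0
    have h1 := hl x (o ⟨y * a, y, hy, rfl⟩)
    rw [hx, o.symm_apply_apply] at h1
    rw [LinearMap.zero_apply, map_zero] at h1
    rw [mul_assoc]
    exact h1.symm

end CenterAux
end

section
namespace CenterAux


section burnside
variable {K V : Type u} [Field K] [IsAlgClosed K] [AddCommGroup V] [Module K V] [Module.Finite K V]

lemma burnside_alg [Nontrivial V] (A : Subalgebra K (Module.End K V))
    (hirr : ∀ U : Submodule K V, (∀ f ∈ A, ∀ v ∈ U, f v ∈ U) → U = ⊥ ∨ U = ⊤) : A = ⊤ := by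
  have hs : IsSimpleModule A V := by
    rw [isSimpleModule_iff]
    refine { exists_pair_ne := ⟨⊥, ⊤, bot_ne_top⟩, eq_bot_or_eq_top := fun U => ?_ }
    rcases hirr (U.restrictScalars K) (fun f hf v hv => U.smul_mem (⟨f, hf⟩ : A) hv) with h | h
    · left; simpa using h
    · right; simpa using h
  have hbij := IsSimpleModule.algebraMap_end_bijective_of_isAlgClosed (A := A) (V := V) K
  rw [eq_top_iff]
  intro f _
  let F : Module.End (Module.End A V) V :=
    { toFun := f
      map_add' := map_add f
      map_smul' := fun g v => by
        obtain ⟨c, rfl⟩ := hbij.2 g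
        simp }
  let b := Module.finBasis K V
  classical
  obtain ⟨r, hr⟩ := jacobson_density (R := A) F (Finset.univ.image b)
  have : f = r := by
    refine b.ext fun i => ?_
    exact hr (b i) (Finset.mem_image_of_mem _ (Finset.mem_univ i))
  rw [this]; exact r.2

lemma burnside (T : Submodule K (Module.End K V)) (hmul : ∀ f ∈ T, ∀ g ∈ T, f * g ∈ T)
    (hne : T ≠ ⊥)
    (hirr : ∀ U : Submodule K V, (∀ f ∈ T, ∀ v ∈ U, f v ∈ U) → U = ⊥ ∨ U = ⊤) : T = ⊤ := by
  obtain ⟨t, ht, ht0⟩ := Submodule.exists_mem_ne_zero_of_ne_bot hne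
  obtain ⟨v, hv⟩ : ∃ v, t v ≠ 0 := by
    by_contra! h
    exact ht0 (LinearMap.ext h)
  have : Nontrivial V := ⟨_, _, hv⟩
  let A : Subalgebra K (Module.End K V) :=
    { carrier := {a | ∀ f ∈ T, f * a ∈ T ∧ a * f ∈ T}
      mul_mem' := fun {a b} ha hb f hf => by
        refine ⟨?_, ?_⟩
        · rw [← mul_assoc]; exact (hb _ (ha f hf).1).1
        · rw [mul_assoc]; exact (ha _ (hb f hf).2).2
      add_mem' := fun {a b} ha hb f hf => by
        refine ⟨?_, ?_⟩
        · rw [mul_add]; exact T.add_mem (ha f hf).1 (hb f hf).1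
        · rw [add_mul]; exact T.add_mem (ha f hf).2 (hb f hf).2
      algebraMap_mem' := fun c f hf => by
        refine ⟨?_, ?_⟩
        · rw [← Algebra.commutes, ← Algebra.smul_def]; exact T.smul_mem _ hf
        · rw [← Algebra.smul_def]; exact T.smul_mem _ hf }
  have hA : A = ⊤ := by
    refine burnside_alg A fun U hU => hirr U fun f hf => hU f fun g hg => ⟨hmul _ hg _ hf, hmul _ hf _ hg⟩
  have hall : ∀ a : Module.End K V, a ∈ A := fun a => hA ▸ Algebra.mem_top
  have rk1 : ∀ (ψ : V →ₗ[K] K) (w : V), ψ.smulRight w ∈ T := by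
    intro ψ w
    obtain ⟨χ, hχ⟩ := Module.Projective.exists_dual_ne_zero K hv
    have : ψ.smulRight w = (χ.smulRight ((χ (t v))⁻¹ • w)) * (t * ψ.smulRight v) := by
      ext x
      simp [smul_smul, hχ]
    rw [this]
    exact (hall _ _ (hall _ _ ht).1).2
  rw [eq_top_iff]
  intro f _
  let b := Module.finBasis K V
  have : f = ∑ i, (b.coord i).smulRight (f (b i)) := by
    refine b.ext fun i => ?_
    simp [Finsupp.single_apply, LinearMap.sum_apply]
  rw [this]
  exact T.sum_mem fun i _ => rk1 _ _
end burnside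

variable {k : Type u} [Field k] {B : Type u} [Ring B] [Algebra k B]
variable {S : NonUnitalSubalgebra k B} {G : ℕ → Submodule k B} {C : ℕ}

lemma exists_span_rep (hp : PrimeElt S) (hne : ∃ x ∈ S, x ≠ 0) {K : Type u} [Field K] [IsAlgClosed K]
    (j : k →+* K) (h : ∃ n, HasRep S j n) :
    ∃ (V : Type u) (_ : AddCommGroup V) (_ : Module K V) (φ : S → Module.End K V),
    Module.Finite K V ∧ IsRep S j φ ∧ Submodule.span K (Set.range φ) = ⊤ := by
  classical
  obtain ⟨V, i1, i2, φ, i3, hn, hφ⟩ := Nat.find_spec h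
  have hmin : ∀ m, m < Module.finrank K V → ¬ HasRep S j m := fun m hm => Nat.find_min h (hn ▸ hm)
  refine ⟨V, i1, i2, φ, i3, hφ, ?_⟩
  obtain ⟨x0, hx0, hx00⟩ := hne
  apply burnside
  · intro f hf g hg
    induction hf using Submodule.span_induction with
    | mem f hf =>
      obtain ⟨x, rfl⟩ := hf
      induction hg using Submodule.span_induction with
      | mem g hg =>
        obtain ⟨y, rfl⟩ := hg
        rw [← hφ.mul]; exact Submodule.subset_span ⟨_, rfl⟩
      | zero => rw [mul_zero]; exact Submodule.zero_mem _
      | add a b _ _ ha hb => rw [mul_add]; exact Submodule.add_mem _ ha hb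
      | smul c a _ ha => rw [mul_smul_comm]; exact Submodule.smul_mem _ _ ha
    | zero => rw [zero_mul]; exact Submodule.zero_mem _
    | add a b _ _ ha hb => rw [add_mul]; exact Submodule.add_mem _ ha hb
    | smul c a _ ha => rw [smul_mul_assoc]; exact Submodule.smul_mem _ _ ha
  · intro hbot
    have : φ ⟨x0, hx0⟩ ∈ (⊥ : Submodule K (Module.End K V)) := hbot ▸ Submodule.subset_span ⟨_, rfl⟩
    exact hx00 (congrArg Subtype.val (hφ.inj _ ((Submodule.mem_bot K).1 this)))
  · intro U hU'
    have hU : ∀ x : S, ∀ v ∈ U, φ x v ∈ U := fun x => hU' _ (Submodule.subset_span ⟨x, rfl⟩)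
    by_contra! hcon
    obtain ⟨hb, ht⟩ := hcon
    have hlt1 : Module.finrank K U < Module.finrank K V := Submodule.finrank_lt ht
    have hlt2 : Module.finrank K (V ⧸ U) < Module.finrank K V := by
      have h1 := Submodule.finrank_quotient_add_finrank U
      have h2 : Module.finrank K U ≠ 0 := fun h => hb (Submodule.finrank_eq_zero.1 h)
      omega
    have e1 : ∃ x : S, x ≠ 0 ∧ ∀ v ∈ U, φ x v = 0 := by
      by_contra! hcon
      refine hmin _ hlt1 ⟨U, inferInstance, inferInstance, fun x => (φ x).restrict (hU x), inferInstance, rfl,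
        ⟨fun x y => ?_, fun x y => ?_, fun c x => ?_, fun x hx => ?_⟩⟩
      · ext v; simp [hφ.add]
      · ext v; simp [hφ.mul]
      · ext v; simp [hφ.smul]
      · by_contra hx0
        obtain ⟨v, hv, hv0⟩ := hcon x hx0
        exact hv0 (congrArg Subtype.val (LinearMap.congr_fun hx ⟨v, hv⟩))
    have e2 : ∃ x : S, x ≠ 0 ∧ ∀ v, φ x v ∈ U := by
      by_contra! hcon
      refine hmin _ hlt2 ⟨V ⧸ U, inferInstance, inferInstance, fun x => U.mapQ U (φ x) (hU x), inferInstance, rfl,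
        ⟨fun x y => ?_, fun x y => ?_, fun c x => ?_, fun x hx => ?_⟩⟩
      · ext v; simp [hφ.add]
      · ext v; simp [hφ.mul]
      · ext v; simp [hφ.smul]
      · by_contra hx0
        obtain ⟨v, hv0⟩ := hcon x hx0
        apply hv0
        have := LinearMap.congr_fun hx (U.mkQ v)
        simpa using this
    obtain ⟨x, hx, hxU⟩ := e1
    obtain ⟨y, hy, hyU⟩ := e2
    have := hp x x.2 y y.2 (fun s hs => by
      have h0 : x * ⟨s, hs⟩ * y = 0 := by
        apply hφ.inj
        ext v
        rw [hφ.mul, hφ.mul]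
        exact hxU _ (hU _ _ (hyU v))
      exact congrArg Subtype.val h0)
    rcases this with h | h
    · exact hx (Subtype.ext h)
    · exact hy (Subtype.ext h)

/-- Faithful matrix representation whose image spans. -/
structure MatRep (S : NonUnitalSubalgebra k B) {K : Type u} [Field K] (j : k →+* K)
    {m : ℕ} (φ : S → Matrix (Fin m) (Fin m) K) : Prop where
  add : ∀ x y, φ (x + y) = φ x + φ y
  mul : ∀ x y, φ (x * y) = φ x * φ y
  smul : ∀ (c : k) x, φ (c • x) = j c • φ x
  inj : ∀ x, φ x = 0 → x = 0
  span : Submodule.span K (Set.range φ) = ⊤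

lemma exists_matrep [IsAlgClosed k] (hp : PrimeElt S) (hG : Growth S G C) (hinf : ¬ FD S) :
    ∃ (K : Type u) (_ : Field K) (j : k →+* K) (m : ℕ) (φ : S → Matrix (Fin m) (Fin m) K),
      MatRep S j φ := by
  obtain ⟨K, i1, i2, j, n, h⟩ := exists_rep hp hG hinf
  have hne : ∃ x ∈ S, x ≠ 0 := by
    obtain ⟨a, ha, ha0, -⟩ := exists_corner hp hG hinf
    exact ⟨a, ha, ha0⟩
  obtain ⟨V, i3, i4, φ, i5, hφ, hs⟩ := exists_span_rep hp hne j ⟨n, h⟩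
  let e := LinearMap.toMatrixAlgEquiv (Module.finBasis K V)
  refine ⟨K, i1, j, _, fun x => e (φ x), fun x y => ?_, fun x y => ?_, fun c x => ?_, fun x hx => ?_, ?_⟩
  · rw [hφ.add, map_add]
  · rw [hφ.mul, map_mul]
  · rw [hφ.smul, map_smul]
  · exact hφ.inj x (e.injective (by rw [hx, map_zero]))
  · have : Set.range (fun x => e (φ x)) = e.toLinearEquiv '' Set.range φ := by
      rw [← Set.range_comp]; rfl
    rw [this]
    have h2 := Submodule.map_span e.toLinearEquiv.toLinearMap (Set.range φ)
    rw [hs, Submodule.map_top, LinearEquiv.range] at h2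
    exact h2.symm

end CenterAux
end

section
namespace CenterAux


lemma multilin_span {K : Type*} [Field K] {n : ℕ} {M : Type*} [AddCommGroup M] [Module K M]
    (F : MultilinearMap K (fun _ : Fin n => M) K) (Z : Set M)
    (h0 : ∀ L : Fin n → M, (∀ t, L t ∈ Z) → F L = 0) (L : Fin n → M)
    (hL : ∀ t, L t ∈ Submodule.span K Z) : F L = 0 := by
  classical
  have key : ∀ s : Finset (Fin n), ∀ L : Fin n → M, (∀ t ∈ s, L t ∈ Submodule.span K Z) →
      (∀ t, t ∉ s → L t ∈ Z) → F L = 0 := by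
    intro s
    induction s using Finset.induction_on with
    | empty => intro L _ h; exact h0 L fun t => h t (by simp)
    | insert a s ha ih =>
      intro L h1 h2
      have hgen : ∀ z ∈ Submodule.span K Z, F (Function.update L a z) = 0 := by
        intro z hz
        induction hz using Submodule.span_induction with
        | mem z hz =>
          apply ih
          · intro t ht
            have : t ≠ a := fun h => ha (h ▸ ht)
            rw [Function.update_of_ne this]
            exact h1 t (Finset.mem_insert_of_mem ht)
          · intro t ht
            by_cases hta : t = a
            · subst hta; rwa [Function.update_self]
            · rw [Function.update_of_ne hta]
              exact h2 t (by simp [hta, ht])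
        | zero => exact F.map_update_zero _ _
        | add x y _ _ hx hy => rw [F.map_update_add, hx, hy, add_zero]
        | smul c x _ hx => rw [F.map_update_smul, hx, smul_zero]
      have := hgen (L a) (h1 a (Finset.mem_insert_self a s))
      rwa [Function.update_eq_self] at this
  exact key Finset.univ L (fun t _ => hL t) (fun t ht => (ht (Finset.mem_univ t)).elim)

lemma ofFn_update {E : Type*} [Monoid E] (T : Submonoid E) :
    ∀ (n : ℕ) (a : Fin n → E) (_ : ∀ t, a t ∈ T) (i : Fin n),
    ∃ P ∈ T, ∃ Q ∈ T, ∀ w, (List.ofFn (Function.update a i w)).prod = P * w * Q := by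
  intro n
  induction n with
  | zero => intro a _ i; exact i.elim0
  | succ n ih =>
    intro a ha i
    refine Fin.cases ?_ (fun i => ?_) i
    · refine ⟨1, T.one_mem, (List.ofFn fun t : Fin n => a t.succ).prod, ?_, fun w => ?_⟩
      · apply Submonoid.list_prod_mem
        intro x hx
        obtain ⟨t, rfl⟩ := (List.mem_ofFn' _ _).1 hx
        exact ha _
      · rw [List.ofFn_succ, List.prod_cons]
        simp [Function.update_of_ne (Fin.succ_ne_zero _)]
    · obtain ⟨P, hP, Q, hQ, h⟩ := ih (fun t => a t.succ) (fun t => ha _) i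
      refine ⟨a 0 * P, T.mul_mem (ha _) hP, Q, hQ, fun w => ?_⟩
      rw [List.ofFn_succ, List.prod_cons, Function.update_of_ne (Fin.succ_ne_zero _).symm]
      have : (fun t : Fin n => Function.update a i.succ w t.succ) = Function.update (fun t => a t.succ) i w := by
        funext t
        by_cases hti : t = i
        · subst hti; simp
        · rw [Function.update_of_ne hti, Function.update_of_ne (fun h => hti (Fin.succ_injective _ h))]
      rw [this, h]
      simp only [mul_assoc]

variable {K : Type u} [Field K] {m : ℕ}


lemma prod_e00 (z : Fin m) : ∀ (n : ℕ) (c : Fin (n+1) → K),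
    (List.ofFn fun t => c t • (Matrix.single z z 1 : (Matrix (Fin m) (Fin m) K))).prod = (∏ t, c t) • Matrix.single z z 1 := by
  intro n
  induction n with
  | zero => intro c; simp
  | succ n ih =>
    intro c
    rw [List.ofFn_succ, List.prod_cons, ih, Fin.prod_univ_succ c, smul_mul_smul_comm,
      Matrix.single_mul_single_same, mul_one]

/-- The trace form of the (generalised) Capelli polynomial. -/
noncomputable def cap {n : ℕ} (L : Fin n → Module.End K (Matrix (Fin m) (Fin m) K)) (x : Fin n → (Matrix (Fin m) (Fin m) K)) : K :=
  ∑ σ : Equiv.Perm (Fin n), Equiv.Perm.sign σ • (List.ofFn fun t => L t (x (σ t))).prod.trace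

noncomputable def capL {n : ℕ} (x : Fin n → (Matrix (Fin m) (Fin m) K)) : MultilinearMap K (fun _ : Fin n => Module.End K (Matrix (Fin m) (Fin m) K)) K :=
  ∑ σ : Equiv.Perm (Fin n), Equiv.Perm.sign σ • (Matrix.traceLinearMap (Fin m) K K).compMultilinearMap
    ((MultilinearMap.mkPiAlgebraFin K n (Matrix (Fin m) (Fin m) K)).compLinearMap fun t => LinearMap.applyₗ (x (σ t)))

lemma capL_apply {n : ℕ} (x : Fin n → (Matrix (Fin m) (Fin m) K)) (L : Fin n → Module.End K (Matrix (Fin m) (Fin m) K)) : capL x L = cap L x := by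
  simp [capL, cap]

noncomputable def capX {n : ℕ} (L : Fin n → Module.End K (Matrix (Fin m) (Fin m) K)) : (Matrix (Fin m) (Fin m) K) [⋀^Fin n]→ₗ[K] K :=
  MultilinearMap.alternatization ((Matrix.traceLinearMap (Fin m) K K).compMultilinearMap
    ((MultilinearMap.mkPiAlgebraFin K n (Matrix (Fin m) (Fin m) K)).compLinearMap L))

lemma capX_apply {n : ℕ} (L : Fin n → Module.End K (Matrix (Fin m) (Fin m) K)) (x : Fin n → (Matrix (Fin m) (Fin m) K)) : capX L x = cap L x := by
  simp [capX, cap, MultilinearMap.alternatization_apply]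

noncomputable def lr (a b : (Matrix (Fin m) (Fin m) K)) : Module.End K (Matrix (Fin m) (Fin m) K) := LinearMap.mulLeft K a * LinearMap.mulRight K b

lemma lr_apply (a b x : (Matrix (Fin m) (Fin m) K)) : lr a b x = a * (x * b) := rfl

lemma cap_units {n : ℕ} (z : Fin m) (e : Fin (n+1) ≃ Fin m × Fin m) (b : Fin (n+1) → (Matrix (Fin m) (Fin m) K))
    (hb : LinearIndependent K b) :
    cap (fun t => lr (Matrix.single z (e t).1 1) (Matrix.single (e t).2 z 1)) b ≠ 0 := by
  have h1 : ∀ t (x : (Matrix (Fin m) (Fin m) K)), lr (Matrix.single z (e t).1 1) (Matrix.single (e t).2 z 1) x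
      = x (e t).1 (e t).2 • (Matrix.single z z 1 : (Matrix (Fin m) (Fin m) K)) := by
    intro t x
    rw [lr_apply]
    ext p q
    by_cases hp : p = z
    · subst hp
      by_cases hq : q = p
      · subst hq; simp
      · have hq' : ¬ p = q := fun h => hq h.symm
        simp [Matrix.single_apply, hq, hq', Matrix.mul_apply]
    · have hp' : ¬ z = p := fun h => hp h.symm
      simp [Matrix.single_apply, hp, hp', Matrix.mul_apply]
  let M : Matrix (Fin (n+1)) (Fin (n+1)) K := fun s t => b s (e t).1 (e t).2
  have h2 : cap (fun t => lr (Matrix.single z (e t).1 1) (Matrix.single (e t).2 z 1)) b = M.det := by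
    rw [Matrix.det_apply]
    unfold cap
    refine Finset.sum_congr rfl fun σ _ => ?_
    simp only [h1]
    rw [prod_e00]
    simp [M]
  rw [h2]
  have h3 : LinearIndependent K M.row := by
    let f : (Matrix (Fin m) (Fin m) K) →ₗ[K] (Fin (n+1) → K) :=
      { toFun := fun x t => x (e t).1 (e t).2
        map_add' := fun _ _ => rfl
        map_smul' := fun _ _ => rfl }
    have hf : LinearMap.ker f = ⊥ := by
      rw [LinearMap.ker_eq_bot']
      intro x hx
      ext p q
      have := congrFun hx (e.symm (p, q))
      change x (e (e.symm (p, q))).1 (e (e.symm (p, q))).2 = 0 at this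
      rw [Equiv.apply_symm_apply] at this
      exact this
    exact hb.map' f hf
  rw [Matrix.linearIndependent_rows_iff_isUnit, Matrix.isUnit_iff_isUnit_det] at h3
  exact h3.ne_zero

lemma exists_dual (hm : 0 < m) (T : NonUnitalSubring (Matrix (Fin m) (Fin m) K)) (hT : Submodule.span K (T : Set (Matrix (Fin m) (Fin m) K)) = ⊤)
    {n : ℕ} (b : Module.Basis (Fin n) K (Matrix (Fin m) (Fin m) K)) (hbT : ∀ i, b i ∈ T) :
    ∃ (d : K) (D : Fin n → (Matrix (Fin m) (Fin m) K)), d ≠ 0 ∧ (∀ i, D i ∈ T) ∧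
      ∀ i j, (b j * D i).trace = if i = j then d else 0 := by
  classical
  have hn : n = m * m := by
    have := Module.finrank_eq_card_basis b
    simp [Module.finrank_matrix] at this
    exact this.symm
  have hn0 : n ≠ 0 := by rw [hn]; positivity
  obtain ⟨n', rfl⟩ : ∃ n', n = n' + 1 := Nat.exists_eq_succ_of_ne_zero hn0
  let e : Fin (n' + 1) ≃ Fin m × Fin m := (finCongr hn).trans finProdFinEquiv.symm
  let Z : Set (Module.End K (Matrix (Fin m) (Fin m) K)) := {f | ∃ a ∈ T, ∃ c ∈ T, f = lr a c}
  have hZ : ∀ y y' : (Matrix (Fin m) (Fin m) K), lr y y' ∈ Submodule.span K Z := by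
    intro y y'
    have hy : y ∈ Submodule.span K (T : Set (Matrix (Fin m) (Fin m) K)) := hT ▸ Submodule.mem_top
    have hy' : y' ∈ Submodule.span K (T : Set (Matrix (Fin m) (Fin m) K)) := hT ▸ Submodule.mem_top
    induction hy using Submodule.span_induction with
    | mem y hy =>
      induction hy' using Submodule.span_induction with
      | mem y' hy' => exact Submodule.subset_span ⟨y, hy, y', hy', rfl⟩
      | zero =>
        have : lr y (0 : (Matrix (Fin m) (Fin m) K)) = 0 := by ext1 x; simp [lr_apply]
        rw [this]; exact Submodule.zero_mem _
      | add a c _ _ ha hc =>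
        have : lr y (a + c) = lr y a + lr y c := by ext1 x; simp [lr_apply, mul_add]
        rw [this]; exact Submodule.add_mem _ ha hc
      | smul r a _ ha =>
        have : lr y (r • a) = r • lr y a := by ext1 x; simp [lr_apply]
        rw [this]; exact Submodule.smul_mem _ _ ha
    | zero =>
      have : lr (0 : (Matrix (Fin m) (Fin m) K)) y' = 0 := by ext1 x; simp [lr_apply]
      rw [this]; exact Submodule.zero_mem _
    | add a c _ _ ha hc =>
      have : lr (a + c) y' = lr a y' + lr c y' := by ext1 x; simp [lr_apply, add_mul]
      rw [this]; exact Submodule.add_mem _ ha hc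
    | smul r a _ ha =>
      have : lr (r • a) y' = r • lr a y' := by ext1 x; simp [lr_apply]
      rw [this]; exact Submodule.smul_mem _ _ ha
  obtain ⟨L, hL, hd⟩ : ∃ L : Fin (n' + 1) → Module.End K (Matrix (Fin m) (Fin m) K), (∀ t, L t ∈ Z) ∧ cap L b ≠ 0 := by
    by_contra! hcon
    refine cap_units ⟨0, hm⟩ e b b.linearIndependent ?_
    rw [← capL_apply]
    refine multilin_span (capL b) Z (fun L hL => ?_) _ (fun t => hZ _ _)
    rw [capL_apply]; exact hcon L hL
  choose a ha c hc hLeq using hL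
  let T1 : Submonoid (Matrix (Fin m) (Fin m) K) :=
    { carrier := {x | x = 1 ∨ x ∈ T}
      one_mem' := Or.inl rfl
      mul_mem' := by
        rintro x y (rfl | hx) (rfl | hy)
        · left; simp
        · right; simpa using hy
        · right; simpa using hx
        · right; exact T.mul_mem hx hy }
  have hT1 : ∀ x ∈ T1, ∀ y ∈ T, y * x ∈ T := by
    rintro x (rfl | hx) y hy
    · simpa using hy
    · exact T.mul_mem hy hx
  have hslot : ∀ i, ∀ σ : Equiv.Perm (Fin (n' + 1)), ∃ D ∈ T, ∀ w : (Matrix (Fin m) (Fin m) K),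
      (List.ofFn fun t => L t (Function.update b i w (σ t))).prod.trace = (w * D).trace := by
    intro i σ
    obtain ⟨P, hP, Q, hQ, h⟩ := ofFn_update T1 _ (fun t => L t (b (σ t))) (fun t => by
      right
      rw [hLeq, lr_apply]
      exact T.mul_mem (ha t) (T.mul_mem (hbT _) (hc t))) (σ.symm i)
    refine ⟨c (σ.symm i) * Q * P * a (σ.symm i),
      T.mul_mem (hT1 _ hP _ (hT1 _ hQ _ (hc _))) (ha _), fun w => ?_⟩
    have h2 : (fun t => L t (Function.update b i w (σ t))) =
        Function.update (fun t => L t (b (σ t))) (σ.symm i) (L (σ.symm i) w) := by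
      funext t
      by_cases ht : t = σ.symm i
      · subst ht; simp
      · rw [Function.update_of_ne ht, Function.update_of_ne]
        intro h; exact ht (by rw [← h]; simp)
    rw [h2, h, hLeq, lr_apply]
    have h3 := Matrix.trace_mul_comm (P * a (σ.symm i)) (w * c (σ.symm i) * Q)
    simp only [mul_assoc] at h3 ⊢
    exact h3
  choose Dσ hDσ hDσ' using hslot
  refine ⟨cap L b, fun i => ∑ σ : Equiv.Perm (Fin (n' + 1)), (Equiv.Perm.sign σ : ℤ) • Dσ i σ, hd,
    fun i => sum_mem fun σ _ => zsmul_mem (hDσ i σ) _, fun i j => ?_⟩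
  have h1 : ∀ w, (w * ∑ σ : Equiv.Perm (Fin (n' + 1)), (Equiv.Perm.sign σ : ℤ) • Dσ i σ).trace
      = cap L (Function.update b i w) := by
    intro w
    unfold cap
    rw [Finset.mul_sum, Matrix.trace_sum]
    refine Finset.sum_congr rfl fun σ _ => ?_
    rw [hDσ', mul_smul_comm, Matrix.trace_smul]
    rfl
  rw [h1, ← capX_apply]
  split_ifs with hij
  · subst hij; rw [Function.update_eq_self, capX_apply]
  · exact (capX L).map_update_self _ hij

lemma dual_expand {n : ℕ} (b : Module.Basis (Fin n) K (Matrix (Fin m) (Fin m) K)) {d : K} {D : Fin n → (Matrix (Fin m) (Fin m) K)}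
    (h : ∀ i j, (b j * D i).trace = if i = j then d else 0) (x : (Matrix (Fin m) (Fin m) K)) :
    d • x = ∑ i, (x * D i).trace • b i := by
  let f : (Matrix (Fin m) (Fin m) K) →ₗ[K] (Matrix (Fin m) (Fin m) K) := ∑ i, (((Matrix.traceLinearMap (Fin m) K K).comp
    (LinearMap.mulRight K (D i))).smulRight (b i))
  have : (d • LinearMap.id : (Matrix (Fin m) (Fin m) K) →ₗ[K] (Matrix (Fin m) (Fin m) K)) = f := by
    refine b.ext fun j => ?_
    simp [f, LinearMap.sum_apply, h]
  have := LinearMap.congr_fun this x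
  simpa [f, LinearMap.sum_apply] using this

lemma dual_central {n : ℕ} (b : Module.Basis (Fin n) K (Matrix (Fin m) (Fin m) K)) {d : K} {D : Fin n → (Matrix (Fin m) (Fin m) K)}
    (h : ∀ i j, (b j * D i).trace = if i = j then d else 0) (a : (Matrix (Fin m) (Fin m) K)) :
    ∑ i, b i * a * D i = (d * a.trace) • (1 : (Matrix (Fin m) (Fin m) K)) := by
  classical
  ext p q
  have h1 : ∀ s r, ∑ i, b i p r * D i s q = if p = q ∧ r = s then d else 0 := by
    intro s r
    have := congrFun (congrFun (dual_expand b h (Matrix.single q s 1)) p) r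
    simp only [Matrix.smul_apply, Matrix.sum_apply, Matrix.trace_single_mul, smul_eq_mul, one_mul, one_smul] at this
    simp only [mul_comm (b _ p r)]
    rw [← this, Matrix.single_apply]
    simp [eq_comm]
  simp only [Matrix.sum_apply, Matrix.mul_apply, Finset.sum_mul]
  rw [Finset.sum_comm]
  have h2 : ∀ s, ∑ i, ∑ r, b i p r * a r s * D i s q = ∑ r, a r s * if p = q ∧ r = s then d else 0 := by
    intro s
    rw [Finset.sum_comm]
    refine Finset.sum_congr rfl fun r _ => ?_
    rw [← h1, Finset.mul_sum]
    refine Finset.sum_congr rfl fun i _ => ?_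
    ring
  simp only [h2]
  by_cases hpq : p = q
  · subst hpq
    simp [Matrix.trace, Finset.mul_sum, mul_comm]
  · simp [hpq]

end CenterAux
end

section
namespace CenterAux

variable {k : Type u} [Field k] {B : Type u} [Ring B] [Algebra k B]
variable {S : NonUnitalSubalgebra k B} {G : ℕ → Submodule k B} {C : ℕ}

theorem exists_center [IsAlgClosed k] (hp : PrimeElt S) (hG : Growth S G C) (hinf : ¬ FD S) :
    ∃ z ∈ S, (∀ s ∈ S, z * s = s * z) ∧ ∀ c : k, z ≠ algebraMap k B c := by
  classical
  obtain ⟨K, iK, j, m, φ, hφ⟩ := exists_matrep hp hG hinf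
  by_contra! hcon
  have hφ0 : φ 0 = 0 := by
    have := hφ.smul 0 0
    simpa using this
  let Φ : S →ₙ+* Matrix (Fin m) (Fin m) K :=
    { toFun := φ, map_mul' := hφ.mul, map_zero' := hφ0, map_add' := hφ.add }
  have hinj : Function.Injective φ := by
    intro x y hxy
    have h : Φ (x - y) = 0 := by rw [map_sub]; exact sub_eq_zero.2 hxy
    exact sub_eq_zero.1 (hφ.inj _ h)
  have hm : 0 < m := by
    rcases Nat.eq_zero_or_pos m with rfl | h
    · exfalso
      apply hinf
      have : ∀ x : S, x = 0 := fun x => hφ.inj x (Subsingleton.elim _ _)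
      have : Subsingleton S.toSubmodule := ⟨fun x y => (this x).trans (this y).symm⟩
      exact Module.Finite.of_finite
    · exact h
  -- a basis in the image
  obtain ⟨n, b, s, hbs⟩ : ∃ (n : ℕ) (b : Module.Basis (Fin n) K (Matrix (Fin m) (Fin m) K)) (s : Fin n → S),
      ∀ i, b i = φ (s i) := by
    let b0 := Module.Basis.ofSpan hφ.span.ge
    have : Finite _ := Module.Finite.finite_basis b0
    have := Fintype.ofFinite (((linearIndepOn_empty K id).extend (Set.empty_subset (Set.range φ))))
    let b := b0.reindex (Fintype.equivFin _)
    have hb : ∀ i, ∃ x, φ x = b i := fun i => by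
      have h1 : b i = b0 ((Fintype.equivFin _).symm i) := b0.reindex_apply _ _
      rw [h1]
      exact Module.Basis.ofSpan_subset hφ.span.ge ⟨_, rfl⟩
    choose s hs using hb
    exact ⟨_, b, s, fun i => (hs i).symm⟩
  have hT : Submodule.span K ((Φ.range : NonUnitalSubring _) : Set (Matrix (Fin m) (Fin m) K)) = ⊤ := hφ.span
  obtain ⟨d, D, hd, hD, htr⟩ := exists_dual hm Φ.range hT b (fun i => ⟨s i, (hbs i).symm⟩)
  choose D' hD' using hD
  have hD'' : ∀ i, φ (D' i) = D i := hD'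
  let t : S → S := fun a => ∑ i, s i * a * D' i
  have ht : ∀ a, φ (t a) = (d * (φ a).trace) • 1 := by
    intro a
    rw [← dual_central b htr]
    change Φ (t a) = _
    rw [map_sum]
    refine Finset.sum_congr rfl fun i _ => ?_
    rw [map_mul, map_mul, hbs, ← hD'']; rfl
  have htc : ∀ a, ∃ c : k, ((t a : S) : B) = algebraMap k B c := by
    intro a
    refine hcon _ (t a).2 fun x hx => ?_
    have : t a * ⟨x, hx⟩ = ⟨x, hx⟩ * t a := by
      apply hinj
      rw [hφ.mul, hφ.mul, ht]; simp
    exact congrArg Subtype.val this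
  have hlam : ∀ a, ∃ c : k, d * (φ a).trace = j c := by
    intro a
    obtain ⟨c, hc⟩ := htc a
    by_cases hc0 : c = 0
    · refine ⟨0, ?_⟩
      have h0 : t a = 0 := Subtype.ext (by rw [hc, hc0, map_zero]; rfl)
      have h1 := ht a
      rw [h0, hφ0] at h1
      have := congrFun (congrFun h1 ⟨0, hm⟩) ⟨0, hm⟩
      simpa using this.symm
    · refine ⟨c, ?_⟩
      -- t a acts as multiplication by c
      have h1 : ∀ x : S, t a * x = c • x := fun x => Subtype.ext (by
        change ((t a : S) : B) * x = c • (x : B)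
        rw [hc, Algebra.smul_def])
      have h2 : (d * (φ a).trace) • φ (t a) = j c • φ (t a) := by
        have := congrArg φ (h1 (t a))
        rw [hφ.mul, hφ.smul] at this
        rw [← this]
        conv_rhs => rw [ht]
        simp
        rw [ht]
      by_contra hne
      have h3 : (d * (φ a).trace - j c) • φ (t a) = 0 := by rw [sub_smul, h2, sub_self]
      have h4 := (smul_eq_zero.1 h3).resolve_left (sub_ne_zero.2 hne)
      have h5 := hφ.inj _ h4
      have h6 : ((t a : S) : B) = 0 := by rw [h5]; rfl
      rw [hc] at h6
      have : Nontrivial B := by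
        by_contra hB
        rw [not_nontrivial_iff_subsingleton] at hB
        apply hinf
        have : Subsingleton S.toSubmodule := ⟨fun x y => Subtype.ext (Subsingleton.elim _ _)⟩
        exact Module.Finite.of_finite
      exact hc0 ((algebraMap k B).injective (by rw [h6, map_zero]))
  choose lam hl using hlam
  -- contradiction
  have hn : ∃ i0 : Fin n, True := by
    by_contra! h
    have : IsEmpty (Fin n) := ⟨fun i => h i⟩
    have h1 := Module.finrank_eq_card_basis b
    simp [Module.finrank_matrix] at h1
    omega
  obtain ⟨i0, -⟩ := hn
  have hd2 : d * d = j (lam (s i0 * D' i0)) := by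
    rw [← hl, hφ.mul, hD'', ← hbs, htr]; simp
  apply hinf
  have key : ∀ y : S, y = ∑ i, ((lam (s i0 * D' i0))⁻¹ * lam (y * D' i)) • s i := by
    intro y
    apply hinj
    change _ = Φ _
    rw [map_sum]
    have h1 := dual_expand b htr (φ y)
    have h2 : φ y = (d * d)⁻¹ • (d • (d • φ y)) := by
      rw [smul_smul d d, smul_smul, inv_mul_cancel₀ (mul_ne_zero hd hd), one_smul]
    rw [h2, h1, Finset.smul_sum, Finset.smul_sum]
    refine Finset.sum_congr rfl fun i _ => ?_
    change _ = φ _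
    rw [hφ.smul, map_mul, ← hl, map_inv₀, ← hd2, smul_smul, smul_smul, hφ.mul, hD'', hbs]
    congr 1
    ring
  refine Module.Finite.of_surjective (M := Fin n → k)
    ({ toFun := fun c => ∑ i, c i • (s i : S.toSubmodule)
       map_add' := fun c c' => by simp [add_smul, Finset.sum_add_distrib]
       map_smul' := fun r c => by simp [mul_smul, Finset.smul_sum] } : (Fin n → k) →ₗ[k] S.toSubmodule) ?_
  intro y
  exact ⟨_, (key y).symm⟩

end CenterAux
end

section
namespace CenterAux

section Gen
variable {k : Type u} [Field k] {B : Type u} [Ring B] [Algebra k B]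

def GIdeal (S : NonUnitalSubalgebra k B) (I : Set B) : Prop :=
  I ⊆ S ∧ (0 : B) ∈ I ∧ (∀ x y, x ∈ I → y ∈ I → x + y ∈ I) ∧
    (∀ x ∈ I, -x ∈ I) ∧ ∀ x ∈ I, ∀ a ∈ S, a * x ∈ I ∧ x * a ∈ I

def GPrime (S : NonUnitalSubalgebra k B) : Prop :=
  ∀ I J : Set B, GIdeal S I → GIdeal S J →
    (∀ x ∈ I, ∀ y ∈ J, x * y = 0) → I ⊆ {0} ∨ J ⊆ {0}

def gprods (F : Set B) : ℕ → Set B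
  | 0 => F
  | n + 1 => gprods F n ∪ {z | ∃ x ∈ gprods F n, ∃ y ∈ F, z = x * y}

def br {R : Type*} [Ring R] (p x : R) : R := x * p - p * x

lemma primeElt_of_prime {S : NonUnitalSubalgebra k (B)} (h : GPrime S) : PrimeElt S := by
  -- left annihilator vanishes
  have hann : ∀ x ∈ S, (∀ s ∈ S, x * s = 0) → x = 0 := by
    intro x hx hxs
    let I : Set (B) := {t | t ∈ S ∧ ∀ s ∈ S, t * s = 0}
    have hI : GIdeal S I := by
      refine ⟨fun t ht => ht.1, ⟨S.zero_mem, fun s _ => zero_mul s⟩, fun a b ha hb => ⟨S.add_mem ha.1 hb.1, fun s hs => ?_⟩,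
        fun a ha => ⟨S.neg_mem ha.1, fun s hs => ?_⟩,
        fun a ha b hb => ⟨⟨S.mul_mem hb ha.1, fun s hs => ?_⟩, ⟨S.mul_mem ha.1 hb, fun s hs => ?_⟩⟩⟩
      · rw [add_mul, ha.2 s hs, hb.2 s hs, add_zero]
      · rw [neg_mul, ha.2 s hs, neg_zero]
      · rw [mul_assoc, ha.2 s hs, mul_zero]
      · rw [ha.2 b hb, zero_mul]
    have := h I I hI hI (fun a ha b hb => ha.2 b hb.1)
    have hsub : I ⊆ {0} := this.elim id id
    exact hsub ⟨hx, hxs⟩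
  intro x hx y hy hxy
  let J : Set (B) := {t | t ∈ S ∧ ∀ s ∈ S, x * s * t = 0}
  let I : Set (B) := {t | t ∈ S ∧ ∀ w ∈ J, t * w = 0}
  have hJ : GIdeal S J := by
    refine ⟨fun t ht => ht.1, ⟨S.zero_mem, fun s _ => mul_zero _⟩, fun a b ha hb => ⟨S.add_mem ha.1 hb.1, fun s hs => ?_⟩,
        fun a ha => ⟨S.neg_mem ha.1, fun s hs => ?_⟩,
        fun a ha b hb => ⟨⟨S.mul_mem hb ha.1, fun s hs => ?_⟩, ⟨S.mul_mem ha.1 hb, fun s hs => ?_⟩⟩⟩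
    · rw [mul_add, ha.2 s hs, hb.2 s hs, add_zero]
    · rw [mul_neg, ha.2 s hs, neg_zero]
    · rw [← mul_assoc, mul_assoc x, ha.2 _ (S.mul_mem hs hb)]
    · rw [← mul_assoc, ha.2 s hs, zero_mul]
  have hI : GIdeal S I := by
    refine ⟨fun t ht => ht.1, ⟨S.zero_mem, fun s _ => zero_mul _⟩, fun a b ha hb => ⟨S.add_mem ha.1 hb.1, fun s hs => ?_⟩,
        fun a ha => ⟨S.neg_mem ha.1, fun s hs => ?_⟩,
        fun a ha b hb => ⟨⟨S.mul_mem hb ha.1, fun s hs => ?_⟩, ⟨S.mul_mem ha.1 hb, fun s hs => ?_⟩⟩⟩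
    · rw [add_mul, ha.2 s hs, hb.2 s hs, add_zero]
    · rw [neg_mul, ha.2 s hs, neg_zero]
    · rw [mul_assoc, ha.2 s hs, mul_zero]
    · rw [mul_assoc, ha.2 _ (hJ.2.2.2.2 s hs b hb).1]
  rcases h I J hI hJ (fun a ha b hb => ha.2 b hb) with h1 | h1
  · left
    exact hann x hx fun s hs => h1 ⟨S.mul_mem hx hs, fun w hw => hw.2 s hs⟩
  · right
    exact h1 ⟨hy, hxy⟩

lemma gprods_mono (F : Set (B)) : Monotone (gprods F) :=
  monotone_nat_of_le_succ fun _ => Set.subset_union_left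

lemma gprods_mul (F : Set (B)) (n : ℕ) : ∀ m, ∀ x ∈ gprods F n, ∀ y ∈ gprods F m,
    x * y ∈ gprods F (n + m + 1) := by
  intro m
  induction m with
  | zero => intro x hx y hy; exact Or.inr ⟨x, hx, y, hy, rfl⟩
  | succ m ih =>
    rintro x hx y (hy | ⟨y1, hy1, y2, hy2, rfl⟩)
    · exact Or.inl (ih x hx y hy)
    · exact Or.inr ⟨x * y1, ih x hx y1 hy1, y2, hy2, (mul_assoc _ _ _).symm⟩

lemma gprods_mem {S : NonUnitalSubalgebra k (B)} (F : Set (B)) (hF : F ⊆ S) (n : ℕ) :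
    gprods F n ⊆ S := by
  induction n with
  | zero => exact hF
  | succ n ih =>
    rintro x (hx | ⟨y, hy, z, hz, rfl⟩)
    · exact ih hx
    · exact S.mul_mem (ih hy) (hF hz)

lemma growth_of_gk {S : NonUnitalSubalgebra k (B)} (F : Finset (B))
    (hF : NonUnitalAlgebra.adjoin k (F : Set (B)) = S) (C : ℕ)
    (hC : ∀ n : ℕ, Module.rank k (Submodule.span k (gprods (F : Set (B)) n))
        ≤ ((C * (n + 1) : ℕ) : Cardinal)) :
    Growth S (fun n => Submodule.span k (gprods (F : Set (B)) n)) C := by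
  have hFS : (F : Set (B)) ⊆ S := hF ▸ NonUnitalAlgebra.subset_adjoin k
  have hmono : Monotone (fun n => Submodule.span k (gprods (F : Set (B)) n)) :=
    fun n m h => Submodule.span_mono (gprods_mono _ h)
  have hmul : ∀ n m, ∀ x ∈ Submodule.span k (gprods (F : Set (B)) n),
      ∀ y ∈ Submodule.span k (gprods (F : Set (B)) m),
      x * y ∈ Submodule.span k (gprods (F : Set (B)) (n + m + 1)) := by
    intro n m x hx y hy
    have h1 := Submodule.mul_mem_mul hx hy
    rw [Submodule.span_mul_span] at h1
    refine Submodule.span_mono ?_ h1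
    rintro _ ⟨a, ha, b, hb, rfl⟩
    exact gprods_mul _ _ _ a ha b hb
  refine ⟨fun n x hx => ?_, fun x hx => ?_, hmono, hmul, fun n => ?_, fun n => ?_, fun n => ?_⟩
  · have : Submodule.span k (gprods (F : Set (B)) n) ≤ S.toSubmodule :=
      Submodule.span_le.2 (gprods_mem _ hFS n)
    exact this hx
  · rw [← hF] at hx
    induction hx using NonUnitalAlgebra.adjoin_induction with
    | mem x hx => exact ⟨0, Submodule.subset_span hx⟩
    | add x y _ _ hx hy =>
      obtain ⟨n, hn⟩ := hx
      obtain ⟨m, hm⟩ := hy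
      exact ⟨max n m, Submodule.add_mem _ (hmono (le_max_left n m) hn) (hmono (le_max_right n m) hm)⟩
    | zero => exact ⟨0, Submodule.zero_mem _⟩
    | mul x y _ _ hx hy =>
      obtain ⟨n, hn⟩ := hx
      obtain ⟨m, hm⟩ := hy
      exact ⟨_, hmul n m x hn y hm⟩
    | smul c x _ hx =>
      obtain ⟨n, hn⟩ := hx
      exact ⟨n, Submodule.smul_mem _ _ hn⟩
  · rw [Submodule.span_le]
    rintro x (hx | ⟨y, hy, z, hz, rfl⟩)
    · exact Submodule.mem_sup_left (Submodule.subset_span hx)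
    · exact Submodule.mem_sup_right (Submodule.mul_mem_mul (Submodule.subset_span hy) (Submodule.subset_span hz))
  · rw [← Module.rank_lt_aleph0_iff]
    exact (hC n).trans_lt Cardinal.natCast_lt_aleph0
  · exact Module.finrank_le_of_rank_le (hC n)

lemma not_fd_of_gk {S : NonUnitalSubalgebra k (B)}
    (h : ∃ F : Finset (B), (F : Set (B)) ⊆ S ∧ ∀ C : ℕ, ∃ n : ℕ,
      ¬ Module.rank k (Submodule.span k (gprods (F : Set (B)) n)) ≤ ((C : ℕ) : Cardinal)) :
    ¬ FD S := by
  intro hfd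
  obtain ⟨F, hF, h⟩ := h
  have hfd' : Module.Finite k S.toSubmodule := hfd
  obtain ⟨n, hn⟩ := h (Module.finrank k S.toSubmodule)
  apply hn
  rw [Module.finrank_eq_rank]
  exact Submodule.rank_mono (Submodule.span_le.2 (gprods_mem _ hF n))


lemma br_add {R : Type*} [Ring R] (p a b : R) : br p (a + b) = br p a + br p b := by
  simp only [br]; noncomm_ring

lemma br_zero {R : Type*} [Ring R] (p : R) : br p 0 = 0 := by simp [br]

lemma br_iter_zero {R : Type*} [Ring R] (p : R) (n : ℕ) : (br p)^[n] 0 = 0 := by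
  induction n with
  | zero => rfl
  | succ n ih => rw [Function.iterate_succ_apply, br_zero, ih]

lemma br_iter_add {R : Type*} [Ring R] (p : R) (n : ℕ) (a b : R) :
    (br p)^[n] (a + b) = (br p)^[n] a + (br p)^[n] b := by
  induction n generalizing a b with
  | zero => rfl
  | succ n ih =>
    rw [Function.iterate_succ_apply, Function.iterate_succ_apply, Function.iterate_succ_apply,
      ← ih, br_add]

/-- local nilpotence of `ad p`. -/
lemma comm_iter {R : Type*} [Ring R] (p : R) : ∀ l n m : ℕ, n + m = l → ∀ a b : R,
    (br p)^[n] a = 0 → (br p)^[m] b = 0 → (br p)^[n + m] (a * b) = 0 := by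
  intro l
  induction l with
  | zero =>
    intro n m h a b ha hb
    obtain ⟨rfl, rfl⟩ : n = 0 ∧ m = 0 := by omega
    simp at ha ⊢
    rw [ha, zero_mul]
  | succ l ih =>
    intro n m h a b ha hb
    rcases n with _ | n
    · simp at ha
      rw [ha, zero_mul]; exact br_iter_zero _ _
    rcases m with _ | m
    · simp at hb
      rw [hb, mul_zero]; exact br_iter_zero _ _
    have e1 : br p (a * b) = a * br p b + br p a * b := by simp only [br]; noncomm_ring
    have : n + 1 + (m + 1) = (n + (m + 1)) + 1 := by omega
    rw [this, Function.iterate_succ_apply, e1, br_iter_add]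
    have h1 := ih (n + 1) m (by omega) a _ ha hb
    have h2 := ih n (m + 1) (by omega) _ b ha hb
    have h3 : n + 1 + m = n + (m + 1) := by omega
    rw [h3] at h1
    rw [h1, h2, add_zero]

lemma iter_zero_mono {R : Type*} [Ring R] (p : R) {n m : ℕ} (h : n ≤ m) {a : R}
    (ha : (br p)^[n] a = 0) : (br p)^[m] a = 0 := by
  obtain ⟨l, rfl⟩ := Nat.exists_eq_add_of_le h
  rw [add_comm, Function.iterate_add_apply, ha, br_iter_zero]

lemma nilp_adjoin {R : Type*} [Ring R] [Algebra k R] (p q : R) (hqp : br p q = 1) (a : R)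
    (ha : a ∈ Algebra.adjoin k {p, q}) : ∃ n, (br p)^[n] a = 0 := by
  induction ha using Algebra.adjoin_induction with
  | mem x hx =>
    rcases hx with rfl | rfl
    · refine ⟨1, ?_⟩
      change br x x = 0
      exact sub_self _
    · refine ⟨2, ?_⟩
      change br p (br p x) = 0
      rw [hqp]; simp [br]
  | algebraMap r =>
    refine ⟨1, ?_⟩
    change br p _ = 0
    rw [br, Algebra.commutes, sub_self]
  | add x y hx hy hx1 hy1 =>
    obtain ⟨n, hn⟩ := hx1
    obtain ⟨m, hm⟩ := hy1
    refine ⟨max n m, ?_⟩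
    rw [br_iter_add, iter_zero_mono _ (le_max_left n m) hn, iter_zero_mono _ (le_max_right n m) hm,
      add_zero]
  | mul x y hx hy hx1 hy1 =>
    obtain ⟨n, hn⟩ := hx1
    obtain ⟨m, hm⟩ := hy1
    exact ⟨n + m, comm_iter p _ n m rfl x y hn hm⟩

lemma br_comm (S : NonUnitalSubalgebra k B) (p : B) (hdq : ∀ a ∈ S, br p a ∈ S) {z : B}
    (hz : ∀ s ∈ S, z * s = s * z) : ∀ s ∈ S, br p z * s = s * br p z := by
  intro s hs
  have h1 := hz s hs
  have h2 := hz _ (hdq s hs)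
  unfold br at h2 ⊢
  have e : (z * p - p * z) * s - s * (z * p - p * z)
     = (z * s - s * z) * p - p * (z * s - s * z) - (z * (s * p - p * s) - (s * p - p * s) * z) := by
    noncomm_ring
  rw [← sub_eq_zero, e, h1, h2]
  simp

theorem abs_main [IsAlgClosed k] (S : NonUnitalSubalgebra k B) (p q : B)
    (hdq : ∀ a ∈ S, br p a ∈ S) (F : Finset B)
    (hF : NonUnitalAlgebra.adjoin k (F : Set B) = S) (hprime : GPrime S)
    (C : ℕ) (hC : ∀ n : ℕ, Module.rank k (Submodule.span k (gprods (F : Set B) n))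
        ≤ ((C * (n + 1) : ℕ) : Cardinal))
    (hgk : ∃ F : Finset B, (F : Set B) ⊆ S ∧ ∀ C : ℕ, ∃ n : ℕ,
      ¬ Module.rank k (Submodule.span k (gprods (F : Set B) n)) ≤ ((C : ℕ) : Cardinal))
    (hcent : ∀ z : B,
      (∀ (n : ℕ), ∀ s ∈ S, z * (p ^ n * s) = (p ^ n * s) * z) →
      ∃ c : k, z = algebraMap k B c)
    (hnil : ∀ a : B, ∃ n, (br p)^[n] a = 0) (hqp : br p q = 1) :
    ∃ w d : B, w ∈ S ∧ (∀ s ∈ S, w * s = s * w) ∧ w = q + d ∧ br p d = 0 := by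
  classical
  obtain ⟨z, hzS, hzc, hzs⟩ := exists_center (primeElt_of_prime hprime) (growth_of_gk F hF C hC)
    (not_fd_of_gk hgk)
  have hker : ∀ w : B, (∀ s ∈ S, w * s = s * w) → br p w = 0 →
      ∃ c : k, w = algebraMap k B c := by
    intro w hw hw0
    apply hcent
    intro n s hs
    have hc : Commute w p := sub_eq_zero.1 hw0
    exact ((hc.pow_right n).mul_right (hw s hs)).eq
  have hiter : ∀ n, (br p)^[n] z ∈ S ∧ ∀ s ∈ S, (br p)^[n] z * s = s * (br p)^[n] z := by
    intro n
    induction n with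
    | zero => exact ⟨hzS, hzc⟩
    | succ n ih =>
      rw [Function.iterate_succ_apply']
      exact ⟨hdq _ ih.1, br_comm S p hdq ih.2⟩
  have hmin := fun m => Nat.find_min (hnil z) (m := m)
  have hspec := Nat.find_spec (hnil z)
  set n := Nat.find (hnil z) with hn
  obtain ⟨w, c, hwS, hwc, hc, hdw⟩ : ∃ (w : B) (c : k), w ∈ S ∧ (∀ s ∈ S, w * s = s * w) ∧ c ≠ 0 ∧
      br p w = algebraMap k B c := by
    rcases hn' : n with _ | _ | n'
    · rw [hn'] at hspec
      exact (hzs 0 (by rw [map_zero]; exact hspec)).elim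
    · rw [hn'] at hspec
      obtain ⟨c, hc⟩ := hker z hzc hspec
      exact (hzs c hc).elim
    · rw [hn'] at hspec hmin
      have h1 := hiter (n' + 1)
      rw [Function.iterate_succ_apply'] at hspec
      obtain ⟨c, hc⟩ := hker _ h1.2 hspec
      refine ⟨(br p)^[n'] z, c, (hiter n').1, (hiter n').2, ?_, ?_⟩
      · rintro rfl
        apply hmin (n' + 1) (by omega)
        rw [hc, map_zero]
      · rw [← hc, Function.iterate_succ_apply']
  refine ⟨c⁻¹ • w, c⁻¹ • w - q, S.smul_mem' _ hwS, ?_, by abel, ?_⟩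
  · intro s hs
    rw [smul_mul_assoc, mul_smul_comm, hwc s hs]
  · have : br p (c⁻¹ • w - q) = c⁻¹ • br p w - br p q := by
      unfold br
      simp only [sub_mul, mul_sub, smul_sub, smul_mul_assoc, mul_smul_comm]
      abel
    rw [this, hqp, hdw, Algebra.algebraMap_eq_smul_one, smul_smul, inv_mul_cancel₀ hc, one_smul, sub_self]

end Gen
end CenterAux
end

section
namespace CenterAux

section Weyl
variable {k : Type u} [Field k] [CharZero k] {N : ℕ}

lemma qp_comm : qW k * pW k - pW k * qW k = 1 := by
  apply Subtype.ext
  change qOp k * pOp k - pOp k * qOp k = 1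
  ext1 n
  ext1
  change derivative (X * monomial n 1) - X * derivative (monomial n (1 : k)) = monomial n 1
  rw [derivative_mul, derivative_X]
  ring

lemma nilp_W (a : WeylA k) : ∃ n, (br (pW k))^[n] a = 0 := by
  have hq : br (pOp k) (qOp k) = 1 := congrArg Subtype.val (qp_comm (k := k))
  obtain ⟨n, hn⟩ := nilp_adjoin (k := k) (pOp k) (qOp k) hq a.1 a.2
  refine ⟨n, Subtype.ext ?_⟩
  have : ∀ (n : ℕ) (a : WeylA k), ((br (pW k))^[n] a).1 = (br (pOp k))^[n] a.1 := by
    intro n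
    induction n with
    | zero => intro a; rfl
    | succ n ih => intro a; rw [Function.iterate_succ_apply, Function.iterate_succ_apply, ih]; rfl
  rw [this, hn]; rfl

lemma dq_apply (a : MW k N) (i j : Fin N) : br (pM k N) a i j = br (pW k) (a i j) := by
  change dq k N a i j = a i j * pW k - pW k * a i j
  simp [dq, pM, Matrix.mul_diagonal, Matrix.diagonal_mul]

lemma dq_iter_apply (n : ℕ) (a : MW k N) (i j : Fin N) :
    ((br (pM k N))^[n] a) i j = (br (pW k))^[n] (a i j) := by
  induction n generalizing a with
  | zero => rfl
  | succ n ih => rw [Function.iterate_succ_apply, Function.iterate_succ_apply, ih, dq_apply]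

lemma nilp_M (a : MW k N) : ∃ n, (br (pM k N))^[n] a = 0 := by
  choose n hn using fun ij : Fin N × Fin N => nilp_W (a ij.1 ij.2)
  refine ⟨Finset.univ.sup n, ?_⟩
  ext1 i j
  rw [dq_iter_apply]
  exact iter_zero_mono _ (Finset.le_sup (Finset.mem_univ (i, j))) (hn (i, j))

lemma br_q : br (pM k N) (qM k N) = 1 := by
  ext1 i j
  rw [dq_apply]
  by_cases h : i = j
  · subst h
    have h1 : qM k N i i = qW k := Matrix.diagonal_apply_eq _ _
    have h2 : (1 : MW k N) i i = 1 := Matrix.one_apply_eq _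
    rw [h1]
    exact qp_comm.trans h2.symm
  · have h1 : qM k N i j = 0 := Matrix.diagonal_apply_ne _ h
    have h2 : (1 : MW k N) i j = 0 := Matrix.one_apply_ne h
    rw [h1]
    exact (br_zero _).trans h2.symm

lemma prods_eq (F : Set (MW k N)) (n : ℕ) : prodsUpTo F n = gprods F n := by
  induction n with
  | zero => rfl
  | succ n ih =>
    change prodsUpTo F n ∪ {z | ∃ x ∈ prodsUpTo F n, ∃ y ∈ F, z = x * y} = _
    rw [ih]; rfl

lemma polyP_apply (f g : k[X]) : (polyP k f : Module.End k k[X]) g = f * g := by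
  have h1 : (polyP k f : Module.End k k[X]) = LinearMap.mulLeft k f := by
    induction f using Polynomial.induction_on with
    | C r => ext1 n; ext1; simp [polyP, Polynomial.C_mul']
    | add p q hp hq => rw [map_add, Subalgebra.coe_add, hp, hq]; ext1 n; ext1; simp [add_mul]
    | monomial n r ih =>
      rw [pow_succ, ← mul_assoc, map_mul, Subalgebra.coe_mul, ih]
      have : (polyP k X : Module.End k k[X]) = LinearMap.mulLeft k X := by
        simp only [polyP, aeval_X]; rfl
      rw [this]
      ext1 m; ext1
      simp [mul_assoc]
  rw [h1]; rfl

lemma eq_polyP (w : WeylA k) (h : w * pW k = pW k * w) : ∃ f : k[X], w = polyP k f := by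
  let g : Module.End k k[X] := w
  have hX : ∀ u : k[X], g (X * u) = X * g u := fun u =>
    LinearMap.congr_fun (congrArg Subtype.val h) u
  refine ⟨g 1, Subtype.ext ?_⟩
  change g = _
  ext1 n
  ext1
  change g (monomial n 1) = (polyP k (g 1) : Module.End k k[X]) (monomial n 1)
  rw [polyP_apply]
  induction n with
  | zero => simp
  | succ n ih =>
    have e : (monomial (n+1) (1:k)) = X * monomial n 1 := by rw [X_mul_monomial]
    rw [e, hX, ih]
    ring

end Weyl
end CenterAux
end

open CenterAux

/-- Lemma 4.2.3: a finitely generated prime `∂_q`-invariant subalgebra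
`S ⊆ M_N(W)` of GK dimension one whose envelope `k[p]·S` has trivial
centralizer contains a central element of the form `q + A(p)`. -/
theorem central_element_q_plus_A [IsAlgClosed k] (N : ℕ) (hN : 0 < N)
    (S : NonUnitalSubalgebra k (MW k N))
    (hdq : ∀ a ∈ S, dq k N a ∈ S)
    (hfg : ∃ F : Finset (MW k N), NonUnitalAlgebra.adjoin k (F : Set (MW k N)) = S)
    (hprime : IsPrimeAlg S)
    (hgk : GKdimOne S)
    (hcent : ∀ z : MW k N,
      (∀ (n : ℕ), ∀ s ∈ S, z * (pM k N ^ n * s) = (pM k N ^ n * s) * z) →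
      ∃ c : k, z = algebraMap k (MW k N) c) :
    ∃ A : Matrix (Fin N) (Fin N) (Polynomial k),
      qM k N + A.map (polyP k) ∈ S ∧
      ∀ s ∈ S, (qM k N + A.map (polyP k)) * s = s * (qM k N + A.map (polyP k)) := by
  obtain ⟨F, hF⟩ := hfg
  obtain ⟨C, hC⟩ := hgk.1 F (hF ▸ NonUnitalAlgebra.subset_adjoin k)
  have hC' : ∀ n : ℕ, Module.rank k (Submodule.span k (gprods (F : Set (MW k N)) n))
        ≤ ((C * (n + 1) : ℕ) : Cardinal) := fun n => by
    rw [← prods_eq]; exact hC n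
  have hgk' : ∃ F : Finset (MW k N), (F : Set (MW k N)) ⊆ S ∧ ∀ C : ℕ, ∃ n : ℕ,
      ¬ Module.rank k (Submodule.span k (gprods (F : Set (MW k N)) n))
        ≤ ((C : ℕ) : Cardinal) := by
    obtain ⟨F, h1, h2⟩ := hgk.2
    refine ⟨F, h1, fun C => ?_⟩
    obtain ⟨n, hn⟩ := h2 C
    refine ⟨n, ?_⟩
    rw [← prods_eq]; exact hn
  have hprime' : GPrime (B := MW k N) S := hprime
  have key := abs_main (k := k) (B := MW k N) S
  obtain ⟨w, d, hwS, hwc, hwd, hd⟩ := key (pM k N) (qM k N) hdq F hF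
    hprime' C hC' hgk' hcent nilp_M br_q
  have hent : ∀ i j, ∃ f : k[X], d i j = polyP k f := by
    intro i j
    apply eq_polyP
    have h1 := congrFun (congrFun hd i) j
    rw [dq_apply] at h1
    exact (sub_eq_zero (G := WeylA k)).1 h1
  choose A hA using hent
  have hfin : (Matrix.of A).map (polyP k) = d := by
    ext1 i j
    exact (hA i j).symm
  refine ⟨Matrix.of A, ?_⟩
  rw [hfin]
  subst hwd
  exact ⟨hwS, hwc⟩

end
end

section
/- Let A be an associative algebra with a locally nilpotent derivation ∂ over a field of characteristic zero. The map φ: H ⊗ A → H ⊗ A given by h ⊗ a ↦ Σ_{s≥0} D^{(s)}h ⊗ ∂^s(a) is a bijective H-linear map with inverse h ⊗ a ↦ Σ_{s≥0} (-D)^{(s)}h ⊗ ∂^s(a), and it intertwines the products a ∘_n b = a·∂^n(b) of Diff A with the products a ∘_(n) b = Σ_{s≥0} D^{(s)} ⊗ ∂^{n+s}(a)·b of Diff° A; i.e., Diff A ≅ Diff° A as conformal algebras. -/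
open Polynomial Finset

noncomputable section

variable (k : Type*) [Field k] [CharZero k]
variable (A : Type*) [Ring A] [Algebra k A]

/-- The conformal product of `Diff A` on `H ⊗ A ≅ A[D]`: determined on `A` by
`a ∘_n b = a·∂^n(b)` and extended by sesquilinearity. -/
def nmulD (d : A →ₗ[k] A) (x y : Polynomial A) (n : ℕ) : Polynomial A :=
  ∑ s ∈ Finset.range (x.natDegree + 1), ∑ t ∈ Finset.range (y.natDegree + 1),
    ∑ j ∈ Finset.range (t + 1),
      if s + j ≤ n then
        (((-1 : ℤ) ^ s * (t.choose j : ℤ) * (n.descFactorial (s + j) : ℤ)) •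
          ((Polynomial.X : Polynomial A) ^ (t - j) *
            Polynomial.C (x.coeff s * (⇑d)^[n - s - j] (y.coeff t))))
      else 0

/-- The conformal product of `Diff° A` on `H ⊗ A ≅ A[D]`: determined on `A` by
`a ∘_(n) b = Σ_s D^{(s)} ⊗ ∂^{n+s}(a)·b` and extended by sesquilinearity;
`M` is any bound with `∂^[M]` killing all coefficients of `x`. -/
def nmulCirc (d : A →ₗ[k] A) (x y : Polynomial A) (n M : ℕ) : Polynomial A :=
  ∑ u ∈ Finset.range (x.natDegree + 1), ∑ t ∈ Finset.range (y.natDegree + 1),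
    ∑ m ∈ Finset.range M,
      if u ≤ n then
        (((-1 : k) ^ u * (Nat.factorial n : k) * ((Nat.factorial m : k))⁻¹ *
            ((t + m).choose (n - u) : k)) •
          ((Polynomial.X : Polynomial A) ^ (t + m - (n - u)) *
            Polynomial.C ((⇑d)^[m] (x.coeff u) * y.coeff t)))
      else 0

section helpers

variable {k A}

theorem descFact_add (n t r : ℕ) :
    n.descFactorial (t + r) = n.descFactorial t * (n - t).descFactorial r := by
  induction r with
  | zero => simp
  | succ r ih =>
    rw [← add_assoc, Nat.descFactorial_succ, ih, Nat.descFactorial_succ, Nat.sub_sub]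
    ring

/-- The exponential `a ↦ Σ_s X^s ∂^s(a)/s!` as a function. -/
def expFun (d : A →ₗ[k] A) (hln : ∀ a : A, ∃ n : ℕ, (⇑d)^[n] a = 0) (a : A) : Polynomial A :=
  open Classical in
  ∑ s ∈ Finset.range (Nat.find (hln a)),
    Polynomial.monomial s (((Nat.factorial s : k))⁻¹ • (⇑d)^[s] a)

theorem iter_zero_of_le (d : A →ₗ[k] A) {a : A} {m s : ℕ} (h : (⇑d)^[m] a = 0) (hs : m ≤ s) :
    (⇑d)^[s] a = 0 := by
  obtain ⟨r, rfl⟩ := Nat.exists_eq_add_of_le' hs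
  rw [Function.iterate_add_apply, h]
  exact iterate_map_zero d r

theorem coeff_expFun (d : A →ₗ[k] A) (hln : ∀ a : A, ∃ n : ℕ, (⇑d)^[n] a = 0) (a : A) (s : ℕ) :
    (expFun d hln a).coeff s = ((Nat.factorial s : k))⁻¹ • (⇑d)^[s] a := by
  classical
  unfold expFun
  simp only [Polynomial.finsetSum_coeff, Polynomial.coeff_monomial, Finset.sum_ite_eq',
    Finset.mem_range]
  split_ifs with h
  · rfl
  · have h0 : (⇑d)^[Nat.find (hln a)] a = 0 := Nat.find_spec (hln a)
    rw [iter_zero_of_le d h0 (by omega), smul_zero]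

theorem iter_leib (d : A →ₗ[k] A)
    (hleib : ∀ a b : A, d (a * b) = d a * b + a * d b) (n : ℕ) (a b : A) :
    ((Nat.factorial n : k))⁻¹ • (⇑d)^[n] (a * b) =
      ∑ p ∈ Finset.HasAntidiagonal.antidiagonal n, (((Nat.factorial p.1 : k))⁻¹ • (⇑d)^[p.1] a) *
        (((Nat.factorial p.2 : k))⁻¹ • (⇑d)^[p.2] b) := by
  have key : (⇑d)^[n] (a * b) =
      ∑ p ∈ Finset.HasAntidiagonal.antidiagonal n, (n.choose p.1) • ((⇑d)^[p.1] a * (⇑d)^[p.2] b) := by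
    induction n with
    | zero => simp
    | succ n ih =>
      rw [Finset.sum_antidiagonal_choose_succ_nsmul (fun i j => (⇑d)^[i] a * (⇑d)^[j] b),
        Function.iterate_succ_apply', ih, map_sum, ← Finset.sum_add_distrib]
      refine Finset.sum_congr rfl fun p hp => ?_
      rw [map_nsmul, hleib, Function.iterate_succ_apply', Function.iterate_succ_apply', nsmul_add,
        add_comm, Nat.choose_symm_of_eq_add (Finset.HasAntidiagonal.mem_antidiagonal.1 hp).symm]
  rw [key, Finset.smul_sum]
  refine Finset.sum_congr rfl fun p hp => ?_
  rw [smul_mul_smul_comm, ← Nat.cast_smul_eq_nsmul k, smul_smul]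
  congr 1
  have := Finset.HasAntidiagonal.mem_antidiagonal.1 hp
  subst this
  rw [Nat.cast_choose k (Nat.le_add_right _ _), Nat.add_sub_cancel_left]
  have := Nat.factorial_ne_zero p.1
  have := Nat.factorial_ne_zero p.2
  have := Nat.factorial_ne_zero (p.1 + p.2)
  field_simp

theorem d_one (d : A →ₗ[k] A)
    (hleib : ∀ a b : A, d (a * b) = d a * b + a * d b) : d 1 = 0 := by
  have := hleib 1 1
  simpa using this

/-- The exponential as a ring homomorphism `A → A[X]`. -/
def expHom (d : A →ₗ[k] A) (hleib : ∀ a b : A, d (a * b) = d a * b + a * d b)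
    (hln : ∀ a : A, ∃ n : ℕ, (⇑d)^[n] a = 0) : A →+* Polynomial A where
  toFun := expFun d hln
  map_one' := by
    ext s
    rw [coeff_expFun]
    cases s with
    | zero => simp
    | succ s =>
      rw [Function.iterate_succ_apply, d_one d hleib, iterate_map_zero d s]
      simp [Polynomial.coeff_one]
  map_zero' := by
    ext s
    rw [coeff_expFun, iterate_map_zero d s]
    simp
  map_add' a b := by
    ext s
    rw [Polynomial.coeff_add]
    simp only [coeff_expFun]
    rw [iterate_map_add d s, smul_add]
  map_mul' a b := by
    ext s
    rw [Polynomial.coeff_mul]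
    simp only [coeff_expFun]
    exact iter_leib d hleib s a b

variable (d : A →ₗ[k] A) (hleib : ∀ a b : A, d (a * b) = d a * b + a * d b)
    (hln : ∀ a : A, ∃ n : ℕ, (⇑d)^[n] a = 0)

theorem coeff_expHom (a : A) (s : ℕ) :
    (expHom d hleib hln a).coeff s = ((Nat.factorial s : k))⁻¹ • (⇑d)^[s] a :=
  coeff_expFun d hln a s

theorem expHom_smul (c : k) (a : A) : expHom d hleib hln (c • a) = c • expHom d hleib hln a := by
  ext s
  rw [Polynomial.coeff_smul, coeff_expHom, coeff_expHom, smul_comm c]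
  congr 1
  induction s with
  | zero => rfl
  | succ s ih => rw [Function.iterate_succ_apply', ih, map_smul, Function.iterate_succ_apply']

theorem expHom_eq (a : A) (m : ℕ) (h : (⇑d)^[m] a = 0) :
    expHom d hleib hln a = ∑ s ∈ Finset.range m, ((Nat.factorial s : k))⁻¹ •
      ((Polynomial.X : Polynomial A) ^ s * Polynomial.C ((⇑d)^[s] a)) := by
  ext s
  simp only [coeff_expHom, Polynomial.finsetSum_coeff, Polynomial.coeff_smul, Polynomial.X_pow_mul,
    Polynomial.coeff_C_mul_X_pow, smul_ite, smul_zero]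
  rw [Finset.sum_ite_eq]
  split_ifs with h'
  · rfl
  · rw [iter_zero_of_le d h (by simpa using h'), smul_zero]

theorem derivative_expHom (a : A) :
    derivative (expHom d hleib hln a) = expHom d hleib hln (d a) := by
  ext s
  rw [Polynomial.coeff_derivative, coeff_expHom, coeff_expHom, ← Function.iterate_succ_apply]
  rw [show ((s : A) + 1) = algebraMap k A ((s : k) + 1) by simp, ← Algebra.commutes,
    ← Algebra.smul_def, smul_smul]
  congr 1
  rw [Nat.factorial_succ]
  have : ((s : k) + 1) ≠ 0 := by exact_mod_cast Nat.succ_ne_zero s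
  have := Nat.factorial_ne_zero s
  push_cast
  field_simp

theorem iter_derivative_expHom (a : A) (r : ℕ) :
    derivative^[r] (expHom d hleib hln a) = expHom d hleib hln ((⇑d)^[r] a) := by
  induction r with
  | zero => rfl
  | succ r ih => rw [Function.iterate_succ_apply', ih, derivative_expHom,
      Function.iterate_succ_apply']

/-- The map `φ` as a ring homomorphism. -/
def phiHom : Polynomial A →+* Polynomial A :=
  Polynomial.eval₂RingHom' (expHom d hleib hln) Polynomial.X
    (fun a => (Polynomial.commute_X (expHom d hleib hln a)).symm)

theorem phiHom_C (a : A) : phiHom d hleib hln (Polynomial.C a) = expHom d hleib hln a := by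
  simp [phiHom, Polynomial.eval₂RingHom']

theorem phiHom_X : phiHom d hleib hln Polynomial.X = Polynomial.X := by
  simp [phiHom, Polynomial.eval₂RingHom']

theorem phiHom_mon (t : ℕ) (a : A) :
    phiHom d hleib hln (Polynomial.X ^ t * Polynomial.C a) =
      Polynomial.X ^ t * expHom d hleib hln a := by
  rw [map_mul, map_pow, phiHom_C, phiHom_X]

theorem phiHom_smul (c : k) (x : Polynomial A) :
    phiHom d hleib hln (c • x) = c • phiHom d hleib hln x := by
  have h : c • x = Polynomial.C (c • (1 : A)) * x := by
    rw [← Polynomial.smul_C, smul_mul_assoc, Polynomial.C_1, one_mul]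
  rw [h, map_mul, phiHom_C, expHom_smul, map_one, smul_mul_assoc, one_mul]

theorem neg_iter (s : ℕ) (a : A) : (⇑(-d))^[s] a = ((-1 : k) ^ s) • (⇑d)^[s] a := by
  induction s with
  | zero => simp
  | succ s ih =>
    rw [Function.iterate_succ_apply', ih, map_smul, Function.iterate_succ_apply', pow_succ]
    simp

theorem phi_inv_C (d' : A →ₗ[k] A) (hleib' : ∀ a b : A, d' (a * b) = d' a * b + a * d' b)
    (hln' : ∀ a : A, ∃ n : ℕ, (⇑d')^[n] a = 0) (hd : d' = -d) (a : A) :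
    phiHom d' hleib' hln' (expHom d hleib hln a) = Polynomial.C a := by
  ext N
  obtain ⟨m0, hm0⟩ := hln a
  have hm : (⇑d)^[m0 + (N + 1)] a = 0 := iter_zero_of_le d hm0 (by omega)
  rw [expHom_eq d hleib hln a _ hm, map_sum, Polynomial.finsetSum_coeff]
  simp only [phiHom_smul, phiHom_mon, Polynomial.coeff_smul, Polynomial.coeff_X_pow_mul',
    coeff_expHom]
  have h1 : ∀ s ∈ Finset.range (m0 + (N + 1)), s ∉ Finset.range (N + 1) →
      ((Nat.factorial s : k))⁻¹ • (if s ≤ N then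
        ((Nat.factorial (N - s) : k))⁻¹ • (⇑d')^[N - s] ((⇑d)^[s] a) else 0) = 0 := by
    intro s _ hs
    rw [if_neg (by simpa using hs), smul_zero]
  rw [← Finset.sum_subset (Finset.range_subset_range.2 (by omega)) h1]
  have h2 : ∀ s ∈ Finset.range (N + 1),
      ((Nat.factorial s : k))⁻¹ • (if s ≤ N then
        ((Nat.factorial (N - s) : k))⁻¹ • (⇑d')^[N - s] ((⇑d)^[s] a) else 0) =
      (((Nat.factorial N : k))⁻¹ * ((1 : k) ^ s * (-1) ^ (N - s) * (N.choose s : k))) •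
        (⇑d)^[N] a := by
    intro s hs
    have hs' : s ≤ N := by simpa [Nat.lt_succ_iff] using hs
    rw [if_pos hs', hd, neg_iter, ← Function.iterate_add_apply, Nat.sub_add_cancel hs', smul_smul,
      smul_smul]
    congr 1
    rw [Nat.cast_choose k hs']
    have := Nat.factorial_ne_zero s
    have := Nat.factorial_ne_zero N
    have := Nat.factorial_ne_zero (N - s)
    field_simp
    simp
  rw [Finset.sum_congr rfl h2, ← Finset.sum_smul, ← Finset.mul_sum, ← add_pow, Polynomial.coeff_C]
  split_ifs with h
  · subst h; simp
  · simp [h]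

theorem phi_inv (d' : A →ₗ[k] A) (hleib' : ∀ a b : A, d' (a * b) = d' a * b + a * d' b)
    (hln' : ∀ a : A, ∃ n : ℕ, (⇑d')^[n] a = 0) (hd : d' = -d) (x : Polynomial A) :
    phiHom d' hleib' hln' (phiHom d hleib hln x) = x := by
  induction x using Polynomial.induction_on' with
  | add p q hp hq => rw [map_add, map_add, hp, hq]
  | monomial t a =>
    rw [← Polynomial.C_mul_X_pow_eq_monomial, ← Polynomial.X_pow_mul, phiHom_mon, map_mul,
      phi_inv_C d hleib hln d' hleib' hln' hd, map_pow, phiHom_X]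

/-- `f D^N z = Σ_r (-1)^r C(N,r) D^{N-r}(D^r f · z)`. -/
theorem deriv_identity (N : ℕ) (f z : Polynomial A) :
    f * derivative^[N] z = ∑ r ∈ Finset.range (N + 1),
      ((-1 : k) ^ r * (N.choose r : k)) • derivative^[N - r] (derivative^[r] f * z) := by
  induction N generalizing f z with
  | zero => simp
  | succ N ih =>
    have h1 : f * derivative^[N + 1] z =
        derivative (f * derivative^[N] z) - derivative f * derivative^[N] z := by
      rw [Polynomial.derivative_mul, Function.iterate_succ_apply']
      abel
    rw [h1, ih f z, ih (derivative f) z, Finset.sum_range_succ' _ (N + 1)]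
    rw [Polynomial.derivative_sum]
    simp only [Polynomial.derivative_smul, ← Function.iterate_succ_apply' (⇑derivative),
      ← Function.iterate_succ_apply]
    have h3 : ∀ r ∈ Finset.range (N + 1),
      ((-1 : k) ^ (r + 1) * ((N + 1).choose (r + 1) : k)) •
        derivative^[N + 1 - (r + 1)] (derivative^[r + 1] f * z) =
      ((-1 : k) ^ (r + 1) * (N.choose (r + 1) : k)) •
        derivative^[N + 1 - (r + 1)] (derivative^[r + 1] f * z) -
      ((-1 : k) ^ r * (N.choose r : k)) •
        derivative^[N - r] (derivative^[r + 1] f * z) := by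
      intro r hr
      rw [show N + 1 - (r + 1) = N - r by omega, ← sub_smul]
      congr 1
      rw [Nat.choose_succ_succ]
      push_cast
      ring
    rw [Finset.sum_congr rfl h3, Finset.sum_sub_distrib]
    have h4 : ∑ r ∈ Finset.range (N + 1), ((-1 : k) ^ r * (N.choose r : k)) •
          derivative^[(N - r).succ] (derivative^[r] f * z) =
        ∑ r ∈ Finset.range (N + 1), ((-1 : k) ^ (r + 1) * (N.choose (r + 1) : k)) •
          derivative^[N + 1 - (r + 1)] (derivative^[r + 1] f * z) +
        ((-1 : k) ^ 0 * ((N + 1).choose 0 : k)) •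
          derivative^[N + 1 - 0] (derivative^[0] f * z) := by
      have h5 := Finset.sum_range_succ' (fun r => ((-1 : k) ^ r * (N.choose r : k)) •
          derivative^[N + 1 - r] (derivative^[r] f * z)) (N + 1)
      have h6 := Finset.sum_range_succ (fun r => ((-1 : k) ^ r * (N.choose r : k)) •
          derivative^[N + 1 - r] (derivative^[r] f * z)) (N + 1)
      simp only [Nat.choose_zero_right] at h5 ⊢
      rw [← h5, h6]
      simp only [Nat.choose_succ_self, Nat.cast_zero, mul_zero, zero_smul, add_zero]
      refine Finset.sum_congr rfl fun r hr => ?_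
      rw [Finset.mem_range] at hr
      rw [show (N - r).succ = N + 1 - r by omega]
    rw [h4]
    abel

/-- `Q`-side functional. -/
def Qf (n : ℕ) (z x : Polynomial A) : Polynomial A :=
  x.sum fun u a => ((-1 : k) ^ u * (n.descFactorial u : k)) •
    derivative^[n - u] (expHom d hleib hln a * z)

/-- `R`-side functional. -/
def Rf (n : ℕ) (z x : Polynomial A) : Polynomial A :=
  x.sum fun u a => ((-1 : k) ^ u * (n.descFactorial u : k)) •
    (expHom d hleib hln a * derivative^[n - u] z)

theorem Qf_zero_fun (n : ℕ) (z : Polynomial A) (u : ℕ) :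
    ((-1 : k) ^ u * (n.descFactorial u : k)) •
    derivative^[n - u] (expHom d hleib hln 0 * z) = 0 := by
  rw [map_zero, zero_mul, Polynomial.iterate_derivative_zero, smul_zero]

theorem Rf_zero_fun (n : ℕ) (z : Polynomial A) (u : ℕ) :
    ((-1 : k) ^ u * (n.descFactorial u : k)) •
    (expHom d hleib hln 0 * derivative^[n - u] z) = 0 := by
  rw [map_zero, zero_mul, smul_zero]

theorem Qf_add (n : ℕ) (z x y : Polynomial A) :
    Qf d hleib hln n z (x + y) = Qf d hleib hln n z x + Qf d hleib hln n z y := by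
  unfold Qf
  apply Polynomial.sum_add_index
  · exact fun u => Qf_zero_fun d hleib hln n z u
  · intro u a b
    rw [map_add, add_mul, iterate_map_add (derivative : Polynomial A →ₗ[A] Polynomial A), smul_add]

theorem Rf_add (n : ℕ) (z x y : Polynomial A) :
    Rf d hleib hln n z (x + y) = Rf d hleib hln n z x + Rf d hleib hln n z y := by
  unfold Rf
  apply Polynomial.sum_add_index
  · exact fun u => Rf_zero_fun d hleib hln n z u
  · intro u a b
    rw [map_add, add_mul, smul_add]

theorem Qf_sum (n : ℕ) (z : Polynomial A) (S : Finset ℕ) (f : ℕ → Polynomial A) :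
    Qf d hleib hln n z (∑ i ∈ S, f i) = ∑ i ∈ S, Qf d hleib hln n z (f i) := by
  classical
  induction S using Finset.induction_on with
  | empty => simp [Qf]
  | insert i S hi ih => rw [Finset.sum_insert hi, Finset.sum_insert hi, Qf_add, ih]

theorem Qf_eq_Rf (n : ℕ) (z x : Polynomial A) :
    Qf d hleib hln n z (phiHom d hleib hln x) = Rf d hleib hln n z x := by
  induction x using Polynomial.induction_on' with
  | add p q hp hq => rw [map_add, Qf_add, hp, hq, Rf_add]
  | monomial t a =>
    have hR : Rf d hleib hln n z (Polynomial.monomial t a) =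
        ((-1 : k) ^ t * (n.descFactorial t : k)) •
          (expHom d hleib hln a * derivative^[n - t] z) := by
      unfold Rf
      rw [Polynomial.sum_monomial_index]
      exact Rf_zero_fun d hleib hln n z t
    obtain ⟨m0, hm0⟩ := hln a
    have hm : (⇑d)^[m0 + (n - t + 1)] a = 0 := iter_zero_of_le d hm0 (by omega)
    rw [hR, ← Polynomial.C_mul_X_pow_eq_monomial, ← Polynomial.X_pow_mul, phiHom_mon,
      expHom_eq d hleib hln a _ hm, Finset.mul_sum, Qf_sum, ← expHom_eq d hleib hln a _ hm,
      deriv_identity (k := k), Finset.smul_sum]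
    have hQ : ∀ r, Qf d hleib hln n z (Polynomial.X ^ t * (((Nat.factorial r : k))⁻¹ •
        ((Polynomial.X : Polynomial A) ^ r * Polynomial.C ((⇑d)^[r] a)))) =
        ((-1 : k) ^ (t + r) * (n.descFactorial (t + r) : k) * ((Nat.factorial r : k))⁻¹) •
          derivative^[n - (t + r)] (derivative^[r] (expHom d hleib hln a) * z) := by
      intro r
      rw [mul_smul_comm, ← mul_assoc, ← pow_add, Polynomial.X_pow_mul,
        Polynomial.C_mul_X_pow_eq_monomial, Polynomial.smul_monomial]
      unfold Qf
      rw [Polynomial.sum_monomial_index _ _ (Qf_zero_fun d hleib hln n z (t + r)), expHom_smul,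
        smul_mul_assoc, Polynomial.iterate_derivative_smul, smul_smul, iter_derivative_expHom]
    simp only [hQ]
    symm
    have hdesc : ∀ r, n.descFactorial (t + r) = n.descFactorial t * (n - t).descFactorial r := by
      intro r
      rw [descFact_add]
    refine Finset.sum_subset_zero_on_sdiff (Finset.range_subset_range.2 (by omega)) ?_ ?_
    · intro r hr
      have : (n - t).descFactorial r = 0 := by
        rw [Nat.descFactorial_eq_zero_iff_lt]
        simp at hr
        omega
      simp [hdesc, this]
    · intro r _
      rw [smul_smul, hdesc, Nat.descFactorial_eq_factorial_mul_choose (n - t) r, Nat.sub_sub]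
      congr 1
      have := Nat.factorial_ne_zero r
      push_cast
      field_simp
      ring

theorem eq_sum_X (y : Polynomial A) :
    y = ∑ t ∈ Finset.range (y.natDegree + 1), Polynomial.X ^ t * Polynomial.C (y.coeff t) := by
  conv_lhs => rw [y.as_sum_range_C_mul_X_pow]
  simp only [Polynomial.X_pow_mul]

theorem iter_deriv_mon (N t : ℕ) (c : A) :
    derivative^[N] ((Polynomial.X : Polynomial A) ^ t * Polynomial.C c) =
      (t.descFactorial N : k) • (Polynomial.X ^ (t - N) * Polynomial.C c) := by
  induction N with
  | zero => simp
  | succ N ih =>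
    rw [Function.iterate_succ_apply', ih, Polynomial.derivative_smul, Polynomial.X_pow_mul,
      Polynomial.C_mul_X_pow_eq_monomial, Polynomial.derivative_monomial, Polynomial.X_pow_mul,
      Polynomial.C_mul_X_pow_eq_monomial, Nat.descFactorial_succ, Nat.sub_sub, ← nsmul_eq_mul',
      ← Nat.cast_smul_eq_nsmul k, ← Polynomial.smul_monomial, smul_smul]
    push_cast
    rw [mul_comm]

theorem nmulCirc_eq (x y : Polynomial A) (n M : ℕ)
    (hM : ∀ u : ℕ, (⇑d)^[M] (x.coeff u) = 0) :
    nmulCirc k A d x y n M = Qf d hleib hln n y x := by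
  unfold Qf
  rw [Polynomial.sum_over_range _ (Qf_zero_fun d hleib hln n y)]
  unfold nmulCirc
  refine Finset.sum_congr rfl fun u _ => ?_
  by_cases hu : u ≤ n
  · simp only [if_pos hu]
    rw [expHom_eq d hleib hln _ M (hM u)]
    conv_rhs => rw [eq_sum_X y]
    rw [Finset.sum_mul_sum]
    conv_rhs => rw [Finset.sum_comm]
    rw [Polynomial.iterate_derivative_sum, Finset.smul_sum]
    refine Finset.sum_congr rfl fun t _ => ?_
    rw [Polynomial.iterate_derivative_sum, Finset.smul_sum]
    refine Finset.sum_congr rfl fun m _ => ?_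
    have : ((Polynomial.X : Polynomial A) ^ m * Polynomial.C ((⇑d)^[m] (x.coeff u))) *
        (Polynomial.X ^ t * Polynomial.C (y.coeff t)) =
        Polynomial.X ^ (t + m) * Polynomial.C ((⇑d)^[m] (x.coeff u) * y.coeff t) := by
      rw [Polynomial.C_mul, add_comm t m, pow_add, mul_assoc, mul_assoc,
        ← mul_assoc (Polynomial.C _) (Polynomial.X ^ t), ← Polynomial.X_pow_mul, mul_assoc]
    rw [smul_mul_assoc, this, Polynomial.iterate_derivative_smul, iter_deriv_mon (k := k),
      smul_smul, smul_smul]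
    congr 1
    rw [Nat.descFactorial_eq_factorial_mul_choose (t + m), ← Nat.factorial_mul_descFactorial hu]
    push_cast
    ring
  · have : n.descFactorial u = 0 := by
      rw [Nat.descFactorial_eq_zero_iff_lt]; omega
    simp [hu, this]

theorem phi_nmulD (x y : Polynomial A) (n : ℕ) :
    phiHom d hleib hln (nmulD k A d x y n) =
      Rf d hleib hln n (phiHom d hleib hln y) x := by
  unfold Rf
  rw [Polynomial.sum_over_range _ (Rf_zero_fun d hleib hln n _)]
  unfold nmulD
  rw [map_sum]
  refine Finset.sum_congr rfl fun s _ => ?_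
  conv_rhs => rw [eq_sum_X y]
  rw [map_sum, map_sum, Polynomial.iterate_derivative_sum, Finset.mul_sum, Finset.smul_sum]
  refine Finset.sum_congr rfl fun t _ => ?_
  rw [phiHom_mon, Polynomial.iterate_derivative_mul, Finset.mul_sum, Finset.smul_sum, map_sum]
  conv_rhs => rw [← Finset.sum_range_reflect]
  have hX : ∀ q : ℕ, derivative^[q] ((Polynomial.X : Polynomial A) ^ t) =
      (t.descFactorial q : k) • Polynomial.X ^ (t - q) := by
    intro q
    simpa using iter_deriv_mon (k := k) q t (1 : A)
  by_cases hs : s ≤ n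
  swap
  · have : n.descFactorial s = 0 := by
      rw [Nat.descFactorial_eq_zero_iff_lt]; omega
    simp only [this, Nat.cast_zero, mul_zero, zero_smul, Finset.sum_const_zero]
    refine Finset.sum_eq_zero fun j _ => ?_
    rw [if_neg (by omega), map_zero]
  have hL : ∀ j, phiHom d hleib hln (if s + j ≤ n then
        (((-1 : ℤ) ^ s * (t.choose j : ℤ) * (n.descFactorial (s + j) : ℤ)) •
          ((Polynomial.X : Polynomial A) ^ (t - j) *
            Polynomial.C (x.coeff s * (⇑d)^[n - s - j] (y.coeff t))))
      else 0) = ((-1 : k) ^ s * (t.choose j : k) * (n.descFactorial (s + j) : k)) •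
        (expHom d hleib hln (x.coeff s) * (Polynomial.X ^ (t - j) *
          expHom d hleib hln ((⇑d)^[n - s - j] (y.coeff t)))) := by
    intro j
    split_ifs with h
    · rw [map_zsmul, phiHom_mon, map_mul, ← Int.cast_smul_eq_zsmul k, ← mul_assoc,
        Polynomial.X_pow_mul]
      push_cast
      simp only [mul_assoc]
    · have : n.descFactorial (s + j) = 0 := by
        rw [Nat.descFactorial_eq_zero_iff_lt]; omega
      simp [this]
  have hRr : ∀ j ∈ Finset.range (n - s + 1),
      ((-1 : k) ^ s * (n.descFactorial s : k)) • (expHom d hleib hln (x.coeff s) *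
        ((n - s).choose (n - s + 1 - 1 - j) •
          (derivative^[n - s - (n - s + 1 - 1 - j)] ((Polynomial.X : Polynomial A) ^ t) *
            derivative^[n - s + 1 - 1 - j] (expHom d hleib hln (y.coeff t))))) =
      ((-1 : k) ^ s * (t.choose j : k) * (n.descFactorial (s + j) : k)) •
        (expHom d hleib hln (x.coeff s) * (Polynomial.X ^ (t - j) *
          expHom d hleib hln ((⇑d)^[n - s - j] (y.coeff t)))) := by
    intro j hj
    have hj' : j ≤ n - s := by simpa [Nat.lt_succ_iff] using hj
    rw [show n - s + 1 - 1 - j = n - s - j by omega, show n - s - (n - s - j) = j by omega, hX,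
      iter_derivative_expHom, ← Nat.cast_smul_eq_nsmul k, smul_mul_assoc, smul_smul,
      mul_smul_comm, smul_smul]
    congr 1
    rw [Nat.choose_symm hj', descFact_add, Nat.descFactorial_eq_factorial_mul_choose t j,
      Nat.descFactorial_eq_factorial_mul_choose (n - s) j]
    push_cast
    ring
  simp only [Nat.succ_eq_add_one]
  rw [Finset.sum_congr rfl hRr, Finset.sum_congr rfl fun j _ => hL j]
  have hz1 : ∀ j, t < j ∨ n - s < j →
      ((-1 : k) ^ s * (t.choose j : k) * (n.descFactorial (s + j) : k)) •
        (expHom d hleib hln (x.coeff s) * (Polynomial.X ^ (t - j) *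
          expHom d hleib hln ((⇑d)^[n - s - j] (y.coeff t)))) = 0 := by
    rintro j (h | h)
    · simp [Nat.choose_eq_zero_of_lt h]
    · have : n.descFactorial (s + j) = 0 := by
        rw [Nat.descFactorial_eq_zero_iff_lt]; omega
      simp [this]
  rw [Finset.sum_subset (Finset.range_subset_range.2 (by omega : t + 1 ≤ t + (n - s) + 1)),
    Finset.sum_subset (Finset.range_subset_range.2 (by omega : n - s + 1 ≤ t + (n - s) + 1))]
  · intro j _ h
    exact hz1 j (Or.inr (by simp at h; omega))
  · intro j _ h
    exact hz1 j (Or.inl (by simp at h; omega))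

end helpers

/-- Proposition 2.3.2: `Diff A ≅ Diff° A` via
`φ(h ⊗ a) = Σ_s D^{(s)}h ⊗ ∂^s(a)`, with inverse
`h ⊗ a ↦ Σ_s (-D)^{(s)}h ⊗ ∂^s(a)`; `φ` is `H`-linear and intertwines the
products of `Diff A` with those of `Diff° A`. -/
theorem diff_iso_diffCirc (d : A →ₗ[k] A)
    (hleib : ∀ a b : A, d (a * b) = d a * b + a * d b)
    (hln : ∀ a : A, ∃ n : ℕ, (⇑d)^[n] a = 0) :
    ∃ φ : Polynomial A ≃ₗ[k] Polynomial A,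
      (∀ (t : ℕ) (a : A) (m : ℕ), (⇑d)^[m] a = 0 →
        φ ((Polynomial.X : Polynomial A) ^ t * Polynomial.C a) =
          ∑ s ∈ Finset.range m, ((Nat.factorial s : k))⁻¹ •
            ((Polynomial.X : Polynomial A) ^ (t + s) * Polynomial.C ((⇑d)^[s] a))) ∧
      (∀ (t : ℕ) (a : A) (m : ℕ), (⇑d)^[m] a = 0 →
        φ.symm ((Polynomial.X : Polynomial A) ^ t * Polynomial.C a) =
          ∑ s ∈ Finset.range m, ((-1 : k) ^ s * ((Nat.factorial s : k))⁻¹) •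
            ((Polynomial.X : Polynomial A) ^ (t + s) * Polynomial.C ((⇑d)^[s] a))) ∧
      (∀ x : Polynomial A, φ ((Polynomial.X : Polynomial A) * x)
        = (Polynomial.X : Polynomial A) * φ x) ∧
      (∀ (x y : Polynomial A) (n M : ℕ),
        (∀ u : ℕ, (⇑d)^[M] ((φ x).coeff u) = 0) →
        φ (nmulD k A d x y n) = nmulCirc k A d (φ x) (φ y) n M) := by
  have hleib' : ∀ a b : A, (-d) (a * b) = (-d) a * b + a * (-d) b := by
    intro a b
    simp only [LinearMap.neg_apply, hleib]
    rw [neg_mul, mul_neg, neg_add]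
  have hln' : ∀ a : A, ∃ n : ℕ, (⇑(-d))^[n] a = 0 := by
    intro a
    obtain ⟨n, hn⟩ := hln a
    exact ⟨n, by rw [neg_iter, hn, smul_zero]⟩
  refine ⟨{ toFun := phiHom d hleib hln
            invFun := phiHom (-d) hleib' hln'
            map_add' := map_add _
            map_smul' := phiHom_smul d hleib hln
            left_inv := phi_inv d hleib hln (-d) hleib' hln' rfl
            right_inv := phi_inv (-d) hleib' hln' d hleib hln (neg_neg d).symm }, ?_, ?_, ?_, ?_⟩
  · intro t a m h
    change phiHom d hleib hln _ = _
    rw [phiHom_mon, expHom_eq d hleib hln a m h, Finset.mul_sum]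
    refine Finset.sum_congr rfl fun s _ => ?_
    rw [mul_smul_comm, ← mul_assoc, ← pow_add]
  · intro t a m h
    change phiHom (-d) hleib' hln' _ = _
    rw [phiHom_mon, expHom_eq (-d) hleib' hln' a m (by rw [neg_iter, h, smul_zero]),
      Finset.mul_sum]
    refine Finset.sum_congr rfl fun s _ => ?_
    rw [mul_smul_comm, ← mul_assoc, ← pow_add, neg_iter, ← Polynomial.smul_C, mul_smul_comm,
      smul_smul, mul_comm ((-1 : k) ^ s)]
  · intro x
    change phiHom d hleib hln _ = _ * phiHom d hleib hln x
    rw [map_mul, phiHom_X]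
  · intro x y n M hM
    change phiHom d hleib hln _ =
      nmulCirc k A d (phiHom d hleib hln x) (phiHom d hleib hln y) n M
    rw [nmulCirc_eq d hleib hln (phiHom d hleib hln x) _ n M hM, Qf_eq_Rf, phi_nmulD]

end
end
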